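/- arXiv:1612.00806 — 3 statements merged into one kernel-verified Lean document; each statement's English description precedes it below -/
import Mathlib

section
/- For every positive integer n, define 𝒴_n = −Σ_{k ⊢ n} Υ_0(k) · [ Σ_{2 ≤ r < s ≤ ℓ(k)} k_r k_s + Σ_{r=2}^{ℓ(k)} k_r (k_r − n) ], where the outer sum runs over all compositions k of n. Then 𝒴_n = 1 if n = 2 and 𝒴_n = 0 for all n ≠ 2. -/
open Finset

/-- The multinomial coefficient `M(k) = n!/(k₁!⋯k_l!)` of a composition `k` of `n`,
as a rational number. -/
noncomputable def compM {n : ℕ} (c : Composition n) : ℚ :=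
  (Nat.factorial n : ℚ) / ∏ j : Fin c.length, (Nat.factorial (c.blocksFun j) : ℚ)

/-- `Υ₀(k) = (-1)^{ℓ(k)} M(k)/ℓ(k)`. -/
noncomputable def Upsilon0 {n : ℕ} (c : Composition n) : ℚ :=
  ((-1 : ℚ) ^ c.length / (c.length : ℚ)) * compM c

/-- The `r`-th part (1-based) of a composition, as a rational number
(`0` if out of range; it is only used for `r ≤ ℓ(k)` below). -/
def compPart {n : ℕ} (c : Composition n) (r : ℕ) : ℚ :=
  (c.blocks.getD (r - 1) 0 : ℚ)

noncomputable def wB (L : List ℕ) : ℚ :=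
  (-1 : ℚ) ^ L.length / (L.map (fun j => (Nat.factorial j : ℚ))).prod

lemma pair_sum (x : ℕ → ℚ) (m : ℕ) :
    (∑ r ∈ Icc 2 (m+1), ∑ s ∈ Icc (r+1) (m+1), x r * x s)
      = ((∑ r ∈ Icc 2 (m+1), x r)^2 - ∑ r ∈ Icc 2 (m+1), x r ^ 2) / 2 := by
  induction m with
  | zero => simp
  | succ m ih =>
    have h2 : 2 ≤ m + 1 + 1 := by omega
    rw [Finset.sum_Icc_succ_top h2, Finset.sum_Icc_succ_top h2, Finset.sum_Icc_succ_top h2]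
    have e : ∀ r ∈ Icc 2 (m+1), ∑ s ∈ Icc (r+1) (m+1+1), x r * x s
        = (∑ s ∈ Icc (r+1) (m+1), x r * x s) + x r * x (m+1+1) := by
      intro r hr
      rw [Finset.mem_Icc] at hr
      rw [Finset.sum_Icc_succ_top (by omega)]
    rw [Finset.sum_congr rfl e, Finset.sum_add_distrib, ih, ← Finset.sum_mul]
    have : Icc (m+1+1+1) (m+1+1) = (∅ : Finset ℕ) := by
      apply Finset.Icc_eq_empty; omega
    rw [this]
    simp only [Finset.sum_empty]
    ring

lemma bracket (x : ℕ → ℚ) (l : ℕ) (hl : 1 ≤ l) (N : ℚ) (hN : ∑ r ∈ Icc 1 l, x r = N) :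
    (∑ r ∈ Icc 2 l, ∑ s ∈ Icc (r+1) l, x r * x s) + ∑ r ∈ Icc 2 l, x r * (x r - N)
      = (∑ r ∈ Icc 1 l, x r * (x r - N)) / 2 := by
  obtain ⟨m, rfl⟩ : ∃ m, l = m + 1 := ⟨l - 1, by omega⟩
  rw [pair_sum]
  have hs : ∀ f : ℕ → ℚ, ∑ r ∈ Icc 1 (m+1), f r = f 1 + ∑ r ∈ Icc 2 (m+1), f r := by
    intro f
    have : Icc 1 (m+1) = insert 1 (Icc 2 (m+1)) := by
      ext a; simp only [Finset.mem_Icc, Finset.mem_insert]; omega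
    rw [this, Finset.sum_insert (by simp)]
  rw [hs] at hN ⊢
  have e : ∑ r ∈ Icc 2 (m+1), x r * (x r - N)
      = ∑ r ∈ Icc 2 (m+1), x r ^ 2 - (∑ r ∈ Icc 2 (m+1), x r) * N := by
    rw [Finset.sum_mul, ← Finset.sum_sub_distrib]
    apply Finset.sum_congr rfl; intros; ring
  rw [e, ← hN]; ring

lemma sum_shift (f : ℕ → ℚ) (l : ℕ) :
    ∑ r ∈ Icc 1 l, f (r - 1) = ∑ r ∈ range l, f r := by
  induction l with
  | zero => simp
  | succ l ih => rw [Finset.sum_Icc_succ_top (by omega), ih, Finset.sum_range_succ]; simp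

lemma sum_getD (L : List ℕ) : ∑ r ∈ range L.length, ((L.getD r 0 : ℕ) : ℚ) = (L.sum : ℚ) := by
  induction L with
  | nil => simp
  | cons a L ih =>
    rw [List.length_cons, Finset.sum_range_succ']
    simp only [List.getD_cons_succ, List.getD_cons_zero, List.sum_cons]
    rw [ih]; push_cast; ring

/-- rotation of a composition -/
def rotC {n : ℕ} (r : ℕ) (c : Composition n) : Composition n where
  blocks := c.blocks.rotate r
  blocks_pos := by
    intro i hi
    exact c.blocks_pos (List.mem_rotate.mp hi)
  blocks_sum := by
    rw [(List.rotate_perm c.blocks r).sum_eq, c.blocks_sum]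

lemma rotC_bij {n : ℕ} (r : ℕ) : Function.Bijective (rotC (n := n) r) := by
  apply Finite.injective_iff_bijective.mp
  intro a b h
  apply Composition.ext
  exact List.rotate_injective r (congrArg Composition.blocks h)

lemma wB_rot (L : List ℕ) (r : ℕ) : wB (L.rotate r) = wB L := by
  unfold wB
  rw [List.length_rotate, ((List.rotate_perm L r).map _).prod_eq]

lemma getD_rot (L : List ℕ) (r : ℕ) (h : r < L.length) :
    (L.rotate r).getD 0 0 = L.getD r 0 := by
  have h0 : 0 < (L.rotate r).length := by rw [List.length_rotate]; omega
  rw [List.getD_eq_getElem _ _ h0, List.getD_eq_getElem _ _ h, List.getElem_rotate]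
  congr 1
  rw [Nat.zero_add, Nat.mod_eq_of_lt h]

lemma cyc {n : ℕ} (hn : 1 ≤ n) (f : ℕ → ℚ) :
    ∑ c : Composition n, wB c.blocks / c.length * ∑ r ∈ range c.length, f (c.blocks.getD r 0)
      = ∑ c : Composition n, wB c.blocks * f (c.blocks.getD 0 0) := by
  have step : ∀ (c : Composition n) (g : ℕ → ℚ), ∑ r ∈ range c.length, g r
      = ∑ r ∈ range n, if r < c.length then g r else 0 := by
    intro c g
    rw [← Finset.sum_filter]
    apply Finset.sum_congr _ (fun _ _ => rfl)
    ext a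
    have := c.length_le
    simp only [Finset.mem_range, Finset.mem_filter]; omega
  have h1 : ∀ c : Composition n,
      wB c.blocks / c.length * ∑ r ∈ range c.length, f (c.blocks.getD r 0)
      = ∑ r ∈ range n, if r < (rotC r c).length then
          wB (rotC r c).blocks / (rotC r c).length * f ((rotC r c).blocks.getD 0 0) else 0 := by
    intro c
    rw [Finset.mul_sum, step]
    apply Finset.sum_congr rfl
    intro r _
    have hl : (rotC r c).length = c.length := List.length_rotate ..
    rw [hl]
    split_ifs with h
    · change _ = wB (c.blocks.rotate r) / _ * f ((c.blocks.rotate r).getD 0 0)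
      rw [wB_rot, getD_rot _ _ h]
    · rfl
  rw [Finset.sum_congr rfl (fun c _ => h1 c), Finset.sum_comm]
  have h2 : ∀ r ∈ range n, (∑ c : Composition n, if r < (rotC r c).length then
          wB (rotC r c).blocks / (rotC r c).length * f ((rotC r c).blocks.getD 0 0) else 0)
      = ∑ c : Composition n, if r < c.length then
          wB c.blocks / c.length * f (c.blocks.getD 0 0) else 0 := by
    intro r _
    exact (rotC_bij r).sum_comp (fun c : Composition n => if r < c.length then
          wB c.blocks / c.length * f (c.blocks.getD 0 0) else 0)
  rw [Finset.sum_congr rfl h2, Finset.sum_comm]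
  apply Finset.sum_congr rfl
  intro c _
  rw [← step c (fun _ => wB c.blocks / c.length * f (c.blocks.getD 0 0))]
  have : (c.length : ℚ) ≠ 0 := by
    have := c.length_pos_of_pos hn
    positivity
  rw [Finset.sum_const, Finset.card_range, nsmul_eq_mul]
  field_simp

lemma first_part {n : ℕ} (hn : 1 ≤ n) (H : List ℕ → ℚ) :
    ∑ c : Composition n, H c.blocks
      = ∑ j ∈ Icc 1 n, ∑ c : Composition (n - j), H (j :: c.blocks) := by
  rw [Finset.sum_sigma']
  symm
  refine Finset.sum_bij (fun (p : Σ j : ℕ, Composition (n - j)) hp =>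
    (⟨p.1 :: p.2.blocks, ?_, ?_⟩ : Composition n)) ?_ ?_ ?_ ?_
  · intro i hi
    simp only [Finset.mem_sigma, Finset.mem_Icc] at hp
    rcases List.mem_cons.mp hi with h | h
    · omega
    · exact p.2.blocks_pos h
  · simp only [Finset.mem_sigma, Finset.mem_Icc] at hp
    rw [List.sum_cons, p.2.blocks_sum]; omega
  · intros; simp
  · rintro ⟨j, c⟩ hc ⟨j', c'⟩ hc' h
    have h := congrArg Composition.blocks h
    simp only [List.cons.injEq] at h
    obtain ⟨rfl, h⟩ := h
    rw [Composition.ext h]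
  · intro c _
    obtain ⟨bl, hp, hs⟩ := c
    cases bl with
    | nil => simp at hs; omega
    | cons a L =>
      have ha : 0 < a := hp (by simp)
      rw [List.sum_cons] at hs
      refine ⟨⟨a, ⟨L, fun {i} hi => hp (by simp [hi]), by omega⟩⟩, ?_, rfl⟩
      simp only [Finset.mem_sigma, Finset.mem_Icc, Finset.mem_univ, and_true]
      omega
  · intros; rfl

lemma wB_cons (j : ℕ) (L : List ℕ) : wB (j :: L) = - (1 / (Nat.factorial j : ℚ)) * wB L := by
  unfold wB
  rw [List.map_cons, List.prod_cons, List.length_cons, pow_succ, div_eq_mul_inv, mul_inv,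
    div_eq_mul_inv]
  ring

lemma alt_sum (m : ℕ) :
    ∑ j ∈ range (m+1), 1 / (Nat.factorial j : ℚ) * ((-1)^(m-j) / (Nat.factorial (m-j) : ℚ))
      = if m = 0 then 1 else 0 := by
  have h := add_pow (1:ℚ) (-1) m
  have e : ∑ j ∈ range (m+1), 1 / (Nat.factorial j : ℚ) * ((-1)^(m-j) / (Nat.factorial (m-j) : ℚ))
     = (∑ j ∈ range (m+1), (1:ℚ)^j * (-1)^(m-j) * (m.choose j : ℚ)) / (Nat.factorial m : ℚ) := by
    rw [Finset.sum_div]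
    apply Finset.sum_congr rfl
    intro j hj
    rw [Finset.mem_range] at hj
    rw [Nat.cast_choose ℚ (by omega : j ≤ m)]
    have := Nat.factorial_ne_zero m
    field_simp
    simp
  rw [e, ← h]
  split_ifs with h0
  · subst h0; simp
  · simp [h0]

lemma sum_wB (m : ℕ) : ∑ c : Composition m, wB c.blocks = (-1)^m / (Nat.factorial m : ℚ) := by
  induction m using Nat.strong_induction_on with
  | _ m ih =>
    rcases Nat.eq_zero_or_pos m with rfl | hm
    · have : ∀ c : Composition 0, wB c.blocks = 1 := by
        intro c
        have : c.blocks = [] := by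
          have := c.length_le
          exact List.length_eq_zero_iff.mp (by change c.length = 0; omega)
        rw [this]; simp [wB]
      rw [Finset.sum_congr rfl (fun c _ => this c)]
      simp [composition_card]
    · rw [first_part hm]
      have h := alt_sum m
      rw [if_neg (by omega)] at h
      have hr : range (m+1) = insert 0 (Icc 1 m) := by
        ext a; simp only [Finset.mem_Icc, Finset.mem_insert, Finset.mem_range]; omega
      rw [hr, Finset.sum_insert (by simp)] at h
      have e : ∀ j ∈ Icc 1 m, ∑ c : Composition (m - j), wB (j :: c.blocks)
         = - (1 / (Nat.factorial j : ℚ) * ((-1)^(m-j) / (Nat.factorial (m-j) : ℚ))) := by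
        intro j hj
        rw [Finset.mem_Icc] at hj
        simp only [wB_cons]
        rw [← Finset.mul_sum, ih (m - j) (by omega)]
        ring
      rw [Finset.sum_congr rfl e, Finset.sum_neg_distrib]
      simp only [Nat.factorial_zero, Nat.cast_one, Nat.sub_zero] at h
      linarith

lemma final_sum (n : ℕ) (hn : 1 ≤ n) :
    ∑ j ∈ Icc 1 n, (1 / (Nat.factorial j : ℚ) * ((-1)^(n-j) / (Nat.factorial (n-j) : ℚ)))
      * ((j : ℚ) * (j - n)) = if n = 2 then 1 else 0 := by
  rcases Nat.lt_or_ge n 2 with h | h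
  · obtain rfl : n = 1 := by omega
    simp
  · obtain ⟨m, rfl⟩ : ∃ m, n = m + 2 := ⟨n - 2, by omega⟩
    rw [Finset.sum_Icc_succ_top (by omega)]
    have ha := alt_sum m
    rw [← sum_shift] at ha
    have e : ∀ j ∈ Icc 1 (m+1), (1 / (Nat.factorial j : ℚ) *
        ((-1)^(m+2-j) / (Nat.factorial (m+2-j) : ℚ))) * ((j : ℚ) * (j - (m+2 : ℕ)))
        = 1 / (Nat.factorial (j-1) : ℚ) * ((-1)^(m-(j-1)) / (Nat.factorial (m-(j-1)) : ℚ)) := by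
      intro j hj
      rw [Finset.mem_Icc] at hj
      obtain ⟨i, rfl⟩ : ∃ i, j = i + 1 := ⟨j - 1, by omega⟩
      obtain ⟨t, rfl⟩ : ∃ t, m = i + t := ⟨m - i, by omega⟩
      have e1 : i + t + 2 - (i + 1) = t + 1 := by omega
      have e2 : i + t - (i + 1 - 1) = t := by omega
      rw [e1, e2, Nat.add_sub_cancel, Nat.factorial_succ, Nat.factorial_succ]
      have := Nat.factorial_ne_zero i
      have := Nat.factorial_ne_zero t
      push_cast
      have h1 : (i : ℚ) + 1 ≠ 0 := by positivity
      have h2 : (t : ℚ) + 1 ≠ 0 := by positivity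
      field_simp
      ring
    rw [Finset.sum_congr rfl e, ha]
    have hz : ((m + 1 + 1 : ℕ) : ℚ) - ((m + 2 : ℕ) : ℚ) = 0 := sub_self _
    rw [hz]
    simp


lemma Ups_eq {n : ℕ} (c : Composition n) :
    Upsilon0 c = (Nat.factorial n : ℚ) * (wB c.blocks / c.length) := by
  unfold Upsilon0 compM wB
  have : (c.blocks.map (fun j => (Nat.factorial j : ℚ))).prod
      = ∏ j : Fin c.length, (Nat.factorial (c.blocksFun j) : ℚ) := by
    conv_lhs => rw [← Composition.ofFn_blocksFun, List.map_ofFn, List.prod_ofFn]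
    rfl
  rw [this]
  change (-1 : ℚ) ^ c.blocks.length / _ * _ = _
  ring

/-- the combinatorial quantity
`𝒴_n = −Σ_{k ⊢ n} Υ₀(k) [ Σ_{2 ≤ r < s ≤ ℓ(k)} k_r k_s + Σ_{r=2}^{ℓ(k)} k_r (k_r − n) ]`
equals `1` if `n = 2` and `0` otherwise. -/
theorem Y_value (n : ℕ) (hn : 1 ≤ n) :
    -∑ c : Composition n, Upsilon0 c *
        ((∑ r ∈ Icc 2 c.length, ∑ s ∈ Icc (r + 1) c.length,
            compPart c r * compPart c s) +
          ∑ r ∈ Icc 2 c.length, compPart c r * (compPart c r - (n : ℚ)))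
      = if n = 2 then 1 else 0 := by
  have h1 : ∀ c : Composition n, Upsilon0 c *
        ((∑ r ∈ Icc 2 c.length, ∑ s ∈ Icc (r + 1) c.length,
            compPart c r * compPart c s) +
          ∑ r ∈ Icc 2 c.length, compPart c r * (compPart c r - (n : ℚ)))
      = (Nat.factorial n : ℚ) / 2 * (wB c.blocks / c.length *
        ∑ r ∈ range c.length, (fun k : ℕ => (k : ℚ) * (k - n)) (c.blocks.getD r 0)) := by
    intro c
    rw [bracket (compPart c) c.length (c.length_pos_of_pos hn) (n : ℚ), Ups_eq]
    · have := sum_shift (fun r => (fun k : ℕ => (k : ℚ) * (k - n)) (c.blocks.getD r 0)) c.length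
      rw [← this]
      unfold compPart
      ring
    · have := sum_shift (fun r => ((c.blocks.getD r 0 : ℕ) : ℚ)) c.length
      unfold compPart
      rw [this]
      have h := sum_getD c.blocks
      rw [c.blocks_sum] at h
      exact h
  rw [Finset.sum_congr rfl (fun c _ => h1 c), ← Finset.mul_sum, cyc hn (fun k : ℕ => (k : ℚ) * (k - n)),
    first_part hn (fun L => wB L * (fun k : ℕ => (k : ℚ) * (k - n)) (L.getD 0 0))]
  have e : ∀ j ∈ Icc 1 n, ∑ c : Composition (n - j),
      wB (j :: c.blocks) * (fun k : ℕ => (k : ℚ) * (k - n)) ((j :: c.blocks).getD 0 0)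
      = - ((1 / (Nat.factorial j : ℚ) * ((-1)^(n-j) / (Nat.factorial (n-j) : ℚ)))
      * ((j : ℚ) * (j - n))) := by
    intro j _
    simp only [List.getD_cons_zero]
    rw [← Finset.sum_mul]
    simp only [wB_cons]
    rw [← Finset.mul_sum, sum_wB]
    ring
  rw [Finset.sum_congr rfl e, Finset.sum_neg_distrib, final_sum n hn]
  split_ifs with h
  · subst h; norm_num [Nat.factorial]
  · simp
end

section
/- Let ℓ ≥ 1, p ∈ [0,1], and let μ be a probability measure on ℕ^ℓ (the law of a random vector (X_1, …, X_ℓ)). Let ν be the probability measure on ℕ^ℓ obtained by composing μ with the product binomial kernel, i.e. ν = μ.bind( x ↦ ⊗_{i=1}^{ℓ} Binomial(x_i, p) ), so that conditionally on (X_1,…,X_ℓ) = x the coordinates Ŷ_1, …, Ŷ_ℓ are independent with Ŷ_i ∼ Binomial(x_i, p). Then for all nonnegative integers k_1, …, k_ℓ with n = k_1 + ⋯ + k_ℓ, E_ν[ Π_{i=1}^{ℓ} binomial(Ŷ_i, k_i) ] = p^n · E_μ[ Π_{i=1}^{ℓ} binomial(X_i, k_i) ], as an identity in [0, ∞] (in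 particular whenever the right-hand side is finite both sides are finite and equal). -/
open MeasureTheory Finset ENNReal

/-- The binomial distribution with parameters `m` and `p`, as a measure on `ℕ`:
mass `choose(m,n) pⁿ (1−p)^{m−n}` at each `n ∈ {0, …, m}`. -/
noncomputable def binMeasure (m : ℕ) (p : ℝ) : Measure ℕ :=
  ∑ n ∈ Finset.range (m + 1),
    ENNReal.ofReal ((m.choose n : ℝ) * p ^ n * (1 - p) ^ (m - n)) • Measure.dirac n

lemma real_binom (m k : ℕ) (p : ℝ) :
    ∑ n ∈ Finset.range (m + 1), ((m.choose n : ℝ) * p ^ n * (1 - p) ^ (m - n)) * (n.choose k : ℝ)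
      = p ^ k * (m.choose k : ℝ) := by
  rcases lt_or_ge m k with h | h
  · rw [Nat.choose_eq_zero_of_lt h]
    simp only [Nat.cast_zero, mul_zero]
    refine Finset.sum_eq_zero fun n hn => ?_
    have : n < k := by have := Finset.mem_range.1 hn; omega
    simp [Nat.choose_eq_zero_of_lt this]
  · obtain ⟨j, rfl⟩ := Nat.exists_eq_add_of_le h
    rw [add_assoc, Finset.sum_range_add, Finset.sum_eq_zero, zero_add]
    · have hb := add_pow p (1 - p) j
      rw [add_sub_cancel, one_pow] at hb
      refine Eq.trans ?_ ((congrArg (fun t => p ^ k * ((k + j).choose k : ℝ) * t) hb.symm).trans (mul_one _))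
      beta_reduce
      rw [Finset.mul_sum]
      refine Finset.sum_congr rfl fun x hx => ?_
      have hx' : x ≤ j := by have := Finset.mem_range.1 hx; omega
      have h1 := Nat.choose_mul (n := k + j) (k := k + x) (s := k) (by omega)
      have e1 : k + j - k = j := by omega
      have e2 : k + x - k = x := by omega
      have e3 : k + j - (k + x) = j - x := by omega
      rw [e1, e2] at h1
      have h2 : ((k + j).choose (k + x) : ℝ) * ((k + x).choose k : ℝ)
        = ((k + j).choose k : ℝ) * (j.choose x : ℝ) := by exact_mod_cast h1
      rw [e3, pow_add]
      linear_combination (p ^ k * p ^ x * (1 - p) ^ (j - x)) * h2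
    · intro n hn
      simp [Nat.choose_eq_zero_of_lt (Finset.mem_range.1 hn)]

lemma lint_bin (m k : ℕ) (p : ℝ) (hp0 : 0 ≤ p) (hp1 : p ≤ 1) :
    ∫⁻ y, (y.choose k : ℝ≥0∞) ∂(binMeasure m p) = ENNReal.ofReal p ^ k * (m.choose k : ℝ≥0∞) := by
  have hq : 0 ≤ 1 - p := by linarith
  unfold binMeasure
  rw [lintegral_finsetSum_measure]
  simp only [lintegral_smul_measure, lintegral_dirac, smul_eq_mul]
  rw [← ENNReal.ofReal_pow hp0, ← ENNReal.ofReal_natCast (m.choose k),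
    ← ENNReal.ofReal_mul (by positivity), ← real_binom, ENNReal.ofReal_sum_of_nonneg]
  · refine Finset.sum_congr rfl fun n _ => ?_
    rw [← ENNReal.ofReal_natCast (n.choose k), ← ENNReal.ofReal_mul (by positivity)]
  · intro n _; positivity

lemma prob_bin (m : ℕ) (p : ℝ) (hp0 : 0 ≤ p) (hp1 : p ≤ 1) :
    IsProbabilityMeasure (binMeasure m p) := by
  constructor
  have := lint_bin m 0 p hp0 hp1
  simpa using this

lemma lint_pi (ℓ : ℕ) (p : ℝ) (hp0 : 0 ≤ p) (hp1 : p ≤ 1) (k x : Fin ℓ → ℕ) :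
    ∫⁻ y : Fin ℓ → ℕ, ∏ i, ((y i).choose (k i) : ℝ≥0∞)
        ∂(Measure.pi fun i => binMeasure (x i) p)
      = ENNReal.ofReal p ^ (∑ i, k i) * ∏ i, ((x i).choose (k i) : ℝ≥0∞) := by
  haveI : ∀ i, IsProbabilityMeasure (binMeasure (x i) p) := fun i => prob_bin _ p hp0 hp1
  have hind := ProbabilityTheory.iIndepFun_pi (μ := fun i => binMeasure (x i) p)
    (X := fun i (n : ℕ) => (n.choose (k i) : ℝ≥0∞)) (fun i => (measurable_of_countable _).aemeasurable)
  rw [ProbabilityTheory.lintegral_prod_eq_prod_lintegral_of_indepFun Finset.univ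
    (fun i (y : Fin ℓ → ℕ) => ((y i).choose (k i) : ℝ≥0∞)) hind
    (fun i => measurable_of_countable _), ← Finset.prod_pow_eq_pow_sum, ← Finset.prod_mul_distrib]
  refine Finset.prod_congr rfl fun i _ => ?_
  rw [← lint_bin _ _ p hp0 hp1]
  exact (measurePreserving_eval (fun i => binMeasure (x i) p) i).lintegral_comp
    (f := fun n : ℕ => (n.choose (k i) : ℝ≥0∞)) (measurable_of_countable _)

/-- if `ν` is obtained from a probability measure `μ` on `ℕ^ℓ` by composing
with the product binomial kernel (independent thinning of each coordinate with retention
probability `p`), then for all `k₁, …, k_ℓ` with `n = k₁ + ⋯ + k_ℓ`,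
`E_ν[Π binom(Ŷᵢ, kᵢ)] = pⁿ E_μ[Π binom(Xᵢ, kᵢ)]` as an identity in `[0,∞]`. -/
theorem thinning_choose_moment (ℓ : ℕ) (hℓ : 1 ≤ ℓ) (p : ℝ) (hp0 : 0 ≤ p) (hp1 : p ≤ 1)
    (μ : Measure (Fin ℓ → ℕ)) [IsProbabilityMeasure μ]
    (k : Fin ℓ → ℕ) :
    (∫⁻ y : Fin ℓ → ℕ, ∏ i, ((y i).choose (k i) : ℝ≥0∞)
        ∂(μ.bind fun x => Measure.pi fun i => binMeasure (x i) p))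
      = ENNReal.ofReal p ^ (∑ i, k i) *
          ∫⁻ x : Fin ℓ → ℕ, ∏ i, ((x i).choose (k i) : ℝ≥0∞) ∂μ := by
  rw [Measure.lintegral_bind (measurable_of_countable _).aemeasurable
    (measurable_of_countable _).aemeasurable]
  simp only [lint_pi ℓ p hp0 hp1]
  rw [lintegral_const_mul _ (measurable_of_countable _)]
end

section
/- Let n ≥ 2, η > 0, let h : ℝ → ℝ be a Schwartz function, and let Υ be any real-valued map on the set of compositions of n. Then, with the convention x_0 = x_n, ∫_{ℝ^n} Υ^n[h](x) · Π_{j=1}^{n} K^sin_η(x_j, x_{j−1}) dx_1⋯dx_n = ∫_{ℝ^{n−1}} Π_{j=1}^{n} ĥ(u_j) · Σ_{k ⊢ n} Υ(k) · max{0, η − Ψ_u(k)/2 − Ψ_{−u}(k)/2} du_1⋯du_{n−1}, where u_n := −(u_1 + ⋯ + u_{n−1}). -/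
open MeasureTheory Finset Complex Real

noncomputable section

/-- The sine kernel with density `η`: `K^sin_η(x,y) = sin(πη(x−y))/(π(x−y))`,
extended by continuity to `η` on the diagonal. -/
def Ksin (η x y : ℝ) : ℝ :=
  if x = y then η else Real.sin (Real.pi * η * (x - y)) / (Real.pi * (x - y))

/-- The Fourier transform `ĥ(u) = ∫ h(x) e^{−2πi x u} dx`. -/
def hat (h : ℝ → ℝ) (u : ℝ) : ℂ :=
  ∫ x : ℝ, (h x : ℂ) * Complex.exp (-(2 * Real.pi * Complex.I * x * u))

/-- Cyclic predecessor on `Fin m` (so `0 ↦ m − 1`), implementing `x₀ = x_m`. -/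
def cpred {m : ℕ} (j : Fin m) : Fin m :=
  ⟨(j + (m - 1)) % m, Nat.mod_lt _ j.pos⟩

/-- `Υ^n[h](x) = Σ_{k ⊢ n} Υ(k) Π_{j=1}^{ℓ(k)} h(x_j)^{k_j}` for `x ∈ ℝⁿ`. -/
def UpsilonFun {n : ℕ} (Υ : Composition n → ℝ) (h : ℝ → ℝ) (x : Fin n → ℝ) : ℝ :=
  ∑ c : Composition n,
    Υ c * ∏ j : Fin c.length, (h (x (Fin.castLE c.length_le j))) ^ (c.blocksFun j)

/-- The vector `(u₁, …, u_{n−1}, u_n) ∈ ℝⁿ` with `u_n := −(u₁ + ⋯ + u_{n−1})`. -/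
def Ufull (n : ℕ) (u : Fin (n - 1) → ℝ) : Fin n → ℝ := fun j =>
  if h : (j : ℕ) < n - 1 then u ⟨j, h⟩ else -(∑ i, u i)

/-- The partial sum `v₁ + ⋯ + v_m` of `v ∈ ℝⁿ`. -/
def psum {n : ℕ} (v : Fin n → ℝ) (m : ℕ) : ℝ :=
  ∑ i : Fin n, if (i : ℕ) < m then v i else 0

/-- `Ψ_v(k) = 2 max_{1 ≤ j < ℓ(k)} max{0, v₁ + ⋯ + v_{k₁+⋯+k_j}}`
(equal to `0` when `ℓ(k) = 1`). -/
def Psi {n : ℕ} (v : Fin n → ℝ) (c : Composition n) : ℝ :=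
  2 * Finset.fold max 0 (fun j => psum v (c.sizeUpTo j)) (Finset.Ico 1 c.length)

def chi (η t : ℝ) : ℂ := Set.indicator (Set.Icc (-(η/2)) (η/2)) (fun _ => (1:ℂ)) t

lemma chi_meas (η : ℝ) : Measurable (chi η) :=
  Measurable.indicator measurable_const measurableSet_Icc

lemma chi_norm (η t : ℝ) : ‖chi η t‖ ≤ 1 := by
  unfold chi Set.indicator; split_ifs <;> simp

lemma chi_int (η : ℝ) : Integrable (chi η) := by
  unfold chi
  rw [integrable_indicator_iff measurableSet_Icc]
  simp [integrableOn_const_iff]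

lemma chi_neg (η t : ℝ) : chi η (-t) = chi η t := by
  unfold chi Set.indicator
  congr 1
  simp only [Set.mem_Icc, eq_iff_iff]
  constructor <;> rintro ⟨a, b⟩ <;> constructor <;> linarith

lemma chi_sq (η t : ℝ) : chi η t * chi η t = chi η t := by
  unfold chi Set.indicator; split_ifs <;> simp

def kC (η y : ℝ) : ℂ := ∫ t : ℝ, chi η t * cexp (2 * Real.pi * Complex.I * t * y)

lemma kC_eq (η : ℝ) (hη : 0 < η) (x y : ℝ) : kC η (x - y) = (Ksin η x y : ℂ) := by
  have e : kC η (x-y) = ∫ t in (-(η/2))..(η/2), cexp ((2 * Real.pi * Complex.I * (x-y)) * t) := by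
    rw [intervalIntegral.integral_of_le (by linarith), ← integral_Icc_eq_integral_Ioc,
      ← integral_indicator measurableSet_Icc]
    unfold kC chi
    congr 1; ext t
    by_cases h : t ∈ Set.Icc (-(η/2)) (η/2)
    · simp only [Set.indicator_of_mem h, one_mul]; congr 1; push_cast; ring
    · simp [Set.indicator_of_notMem h]
  rw [e]
  unfold Ksin
  split_ifs with h
  · subst h; simp
  · have hxy : (x:ℂ) - y ≠ 0 := by
      rw [← Complex.ofReal_sub]; exact_mod_cast sub_ne_zero.2 h
    have hp : (Real.pi : ℂ) ≠ 0 := by exact_mod_cast Real.pi_ne_zero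
    rw [integral_exp_mul_complex (by simp [hxy, hp])]
    push_cast
    rw [Complex.sin]
    rw [show 2 * (Real.pi:ℂ) * I * (x - y) * (η/2) = Real.pi * η * (x - y) * I by ring,
      show 2 * (Real.pi:ℂ) * I * (x - y) * -(η/2) = -(Real.pi * η * (x - y)) * I by ring]
    field_simp
    rw [Complex.I_sq]; ring

lemma kC_norm_le (η y : ℝ) (hη : 0 < η) : ‖kC η y‖ ≤ η := by
  unfold kC
  refine (norm_integral_le_integral_norm _).trans ?_
  have : ∀ t : ℝ, ‖chi η t * cexp (2 * Real.pi * Complex.I * t * y)‖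
      = Set.indicator (Set.Icc (-(η/2)) (η/2)) (fun _ => (1:ℝ)) t := by
    intro t
    rw [norm_mul, show (2 * Real.pi * Complex.I * t * y : ℂ) = ((2 * Real.pi * t * y : ℝ) : ℂ) * I by
      push_cast; ring, Complex.norm_exp_ofReal_mul_I]
    unfold chi Set.indicator; split_ifs <;> simp
  simp_rw [this]
  rw [integral_indicator measurableSet_Icc]
  simp
  exact hη.le

lemma kC_decay (η : ℝ) (hη : 0 < η) : ∀ y, ‖kC η y‖ ≤ (η + 1) * (1 + ‖y‖)⁻¹ := by
  intro y
  have h1 := kC_norm_le η y hη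
  have h2 : ‖kC η y‖ * |y| ≤ 1 := by
    have := kC_eq η hη y 0
    rw [sub_zero] at this
    rw [this]
    unfold Ksin
    split_ifs with h
    · subst h; simp
    · simp only [sub_zero, Complex.norm_real, Real.norm_eq_abs, abs_div, abs_mul]
      have hy : 0 < |y| := abs_pos.2 h
      have hp : 1 < |Real.pi| := by rw [abs_of_pos Real.pi_pos]; linarith [Real.pi_gt_three]
      rw [div_mul_eq_mul_div, div_le_one (by positivity)]
      have := Real.abs_sin_le_one (Real.pi * η * y)
      nlinarith
  rw [← div_eq_mul_inv, le_div_iff₀ (by positivity), Real.norm_eq_abs]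
  linarith

lemma kC_cont (η : ℝ) : Continuous (kC η) := by
  unfold kC
  refine continuous_of_dominated (F := fun (y t : ℝ) => chi η t * cexp (2 * Real.pi * Complex.I * t * y))
    (bound := fun t => ‖chi η t‖) ?_ ?_ (chi_int η).norm ?_
  · intro y
    exact ((chi_meas η).aestronglyMeasurable).mul (by fun_prop)
  · intro y
    refine Filter.Eventually.of_forall fun t => ?_
    rw [norm_mul, show (2 * Real.pi * Complex.I * t * y : ℂ) = ((2 * Real.pi * t * y : ℝ) : ℂ) * I by
      push_cast; ring, Complex.norm_exp_ofReal_mul_I, mul_one]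
  · refine Filter.Eventually.of_forall fun t => ?_
    fun_prop

open FourierTransform Convolution in
lemma kC_repro (η : ℝ) (hη : 0 < η) (a : ℝ) : ∫ y, kC η (a - y) * kC η y = kC η a := by
  let f : ℝ → ℂ := fun t => chi η t * cexp (2 * Real.pi * Complex.I * t * a)
  have hf : Integrable f := by
    refine (chi_int η).mul_bdd (c := 1) (by fun_prop) ?_
    refine Filter.Eventually.of_forall fun t => ?_
    rw [show (2 * Real.pi * Complex.I * t * a : ℂ) = ((2 * Real.pi * t * a : ℝ) : ℂ) * I by
      push_cast; ring, Complex.norm_exp_ofReal_mul_I]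
  have Ff : ∀ y, 𝓕 f y = kC η (a - y) := by
    intro y
    rw [Real.fourier_real_eq_integral_exp_smul]
    unfold kC
    congr 1; ext t
    simp only [f, smul_eq_mul]
    rw [mul_left_comm, ← Complex.exp_add]
    congr 2; push_cast; ring
  have Fc : ∀ y, 𝓕 (chi η) y = kC η y := by
    intro y
    rw [Real.fourier_real_eq_integral_exp_smul]
    unfold kC
    rw [← integral_neg_eq_self]
    congr 1; ext t
    rw [chi_neg, smul_eq_mul, mul_comm]
    congr 2; push_cast; ring
  let G := f ⋆[ContinuousLinearMap.mul ℂ ℂ] (chi η)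
  have hG : Integrable G := hf.integrable_convolution _ (chi_int η)
  have FG : 𝓕 G = fun y => kC η (a - y) * kC η y := by
    ext y
    rw [Real.fourier_mul_convolution_eq hf (chi_int η), Ff, Fc]
  have hFG : Integrable (𝓕 G) := by
    rw [FG]
    have hc : Continuous fun y => kC η (a - y) * kC η y :=
      ((kC_cont η).comp (by fun_prop)).mul (kC_cont η)
    have i2 : Integrable (fun y : ℝ => (1 + ‖y‖) ^ (-2:ℝ)) :=
      integrable_one_add_norm (by simp)
    have i3 : Integrable (fun y : ℝ => (1 + ‖a - y‖) ^ (-2:ℝ)) := i2.comp_sub_left a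
    refine ((i2.add i3).const_mul ((η+1)^2)).mono' hc.aestronglyMeasurable ?_
    refine Filter.Eventually.of_forall fun y => ?_
    have h1 := kC_decay η hη y
    have h2 := kC_decay η hη (a - y)
    have p1 : 0 < (1 + ‖y‖) := by positivity
    have p2 : 0 < (1 + ‖a - y‖) := by positivity
    simp only [Pi.add_apply]
    rw [norm_mul, Real.rpow_neg p1.le, Real.rpow_neg p2.le]
    norm_cast
    have := mul_le_mul h2 h1 (norm_nonneg _) (by positivity)
    refine this.trans ?_
    rw [← inv_pow, ← inv_pow]
    nlinarith [sq_nonneg ((1 + ‖y‖)⁻¹ - (1 + ‖a - y‖)⁻¹), sq_nonneg ((1 + ‖y‖)⁻¹ + (1 + ‖a - y‖)⁻¹), sq_nonneg (η+1),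
      mul_nonneg (sq_nonneg (η+1)) (sq_nonneg ((1 + ‖y‖)⁻¹ - (1 + ‖a - y‖)⁻¹)), 
      mul_nonneg (sq_nonneg (η+1)) (sq_nonneg ((1 + ‖y‖)⁻¹ + (1 + ‖a - y‖)⁻¹))]
  have hGc : ContinuousAt G 0 := by
    refine continuousAt_of_dominated (F := fun (s t : ℝ) => f t * chi η (s - t)) (bound := fun t => ‖f t‖)
      ?_ ?_ hf.norm ?_
    · refine Filter.Eventually.of_forall fun s => hf.aestronglyMeasurable.mul ?_
      exact ((chi_meas η).comp (by fun_prop)).aestronglyMeasurable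
    · refine Filter.Eventually.of_forall fun s => Filter.Eventually.of_forall fun t => ?_
      rw [norm_mul]
      exact mul_le_of_le_one_right (norm_nonneg _) (chi_norm _ _)
    · have hae : ∀ᵐ t : ℝ, t ∉ ({η/2, -(η/2)} : Set ℝ) :=
        (Set.toFinite _).countable.ae_notMem volume
      filter_upwards [hae] with t ht
      simp only [Set.mem_insert_iff, Set.mem_singleton_iff, not_or] at ht
      refine continuousAt_const.mul ?_
      have : ContinuousAt (chi η) (0 - t) := by
        unfold chi
        refine ContinuousOn.continuousAt_indicator (s := Set.Icc (-(η/2)) (η/2)) (f := fun _ => (1:ℂ)) (by fun_prop) ?_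
        rw [frontier_Icc (by linarith)]
        simp only [Set.mem_insert_iff, Set.mem_singleton_iff, not_or]
        constructor
        · intro h; apply ht.1; linarith
        · intro h; apply ht.2; linarith
      exact ContinuousAt.comp (f := fun s : ℝ => s - t) this (by fun_prop)
  have := hG.fourierInv_fourier_eq hFG hGc
  rw [FG, Real.fourierInv_eq'] at this
  simp only [inner_zero_right, mul_zero, Complex.ofReal_zero, zero_mul, Complex.exp_zero, one_smul] at this
  rw [this]
  show ∫ t, f t * chi η (0 - t) = _
  unfold kC
  congr 1; ext t
  rw [zero_sub, chi_neg]
  simp only [f]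
  rw [mul_right_comm, chi_sq]

def hPow (h : SchwartzMap ℝ ℝ) : ℕ → SchwartzMap ℝ ℂ
  | 0 => SchwartzMap.postcompCLM Complex.ofRealCLM h
  | k+1 => SchwartzMap.pairing (ContinuousLinearMap.mul ℂ ℂ)
      (SchwartzMap.postcompCLM Complex.ofRealCLM h) (hPow h k)

lemma hPow_apply (h : SchwartzMap ℝ ℝ) (k : ℕ) (x : ℝ) : hPow h k x = (h x : ℂ) ^ (k+1) := by
  induction k with
  | zero => simp [hPow]
  | succ k ih => simp [hPow, ih]; ring

open FourierTransform in
def Fh (h : SchwartzMap ℝ ℝ) (k : ℕ) : SchwartzMap ℝ ℂ := 𝓕 (hPow h (k-1))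

open FourierTransform in
lemma Fh_apply (h : SchwartzMap ℝ ℝ) (k : ℕ) (hk : 0 < k) (u : ℝ) :
    Fh h k u = ∫ x : ℝ, (h x : ℂ)^k * cexp (-(2 * Real.pi * Complex.I * x * u)) := by
  unfold Fh
  rw [SchwartzMap.fourier_coe, Real.fourier_real_eq_integral_exp_smul]
  congr 1; ext x
  rw [hPow_apply, Nat.sub_add_cancel hk, smul_eq_mul, mul_comm]
  congr 2; push_cast; ring

lemma hat_eq (h : SchwartzMap ℝ ℝ) (u : ℝ) : hat (fun t => h t) u = Fh h 1 u := by
  rw [Fh_apply _ _ one_pos]; simp [hat]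

open FourierTransform Convolution in
lemma Fh_conv (h : SchwartzMap ℝ ℝ) (k : ℕ) (v : ℝ) :
    ∫ u, Fh h 1 u * Fh h (k+1) (v - u) = Fh h (k+2) v := by
  have key := SchwartzMap.convolution_apply (ContinuousLinearMap.mul ℂ ℂ) (𝓕⁻ (hPow h 0)) (𝓕⁻ (hPow h k)) (-v)
  have inv : ∀ (f : SchwartzMap ℝ ℂ) (x : ℝ), (𝓕⁻ f) x = (𝓕 f) (-x) := by
    intro f x
    rw [SchwartzMap.fourierInv_coe, Real.fourierInv_eq_fourier_neg, SchwartzMap.fourier_coe]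
  have l : SchwartzMap.convolution (ContinuousLinearMap.mul ℂ ℂ) (𝓕⁻ (hPow h 0)) (𝓕⁻ (hPow h k))
      = 𝓕⁻ (hPow h (k+1)) := by
    have := SchwartzMap.fourier_convolution (ContinuousLinearMap.mul ℂ ℂ) (𝓕⁻ (hPow h 0)) (𝓕⁻ (hPow h k))
    rw [FourierTransform.fourier_fourierInv_eq, FourierTransform.fourier_fourierInv_eq] at this
    rw [show hPow h (k+1) = SchwartzMap.pairing (ContinuousLinearMap.mul ℂ ℂ) (hPow h 0) (hPow h k) from rfl,
      ← this, FourierTransform.fourierInv_fourier_eq]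
  rw [l, inv, neg_neg] at key
  show _ = 𝓕 (hPow h (k+1)) v
  rw [key, ← integral_neg_eq_self]
  show _ = ∫ t, (𝓕⁻ (hPow h 0)) t * (𝓕⁻ (hPow h k)) (-v - t)
  congr 1; ext u
  rw [inv, inv]
  show Fh h 1 (-u) * Fh h (k+1) (v - -u) = Fh h 1 (-u) * Fh h (k+1) (-(-v-u))
  congr 2; ring

def Nice (f : ℝ → ℂ) : Prop := Measurable f ∧ ∃ C, ∀ x, ‖f x‖ ≤ C

lemma Nice.mul {f g : ℝ → ℂ} (hf : Nice f) (hg : Nice g) : Nice (fun x => f x * g x) := by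
  obtain ⟨mf, C, hC⟩ := hf
  obtain ⟨mg, D, hD⟩ := hg
  refine ⟨mf.mul mg, C * D, fun x => ?_⟩
  rw [norm_mul]
  exact mul_le_mul (hC x) (hD x) (norm_nonneg _) ((norm_nonneg _).trans (hC x))

lemma nice_one : Nice (fun _ => (1:ℂ)) := ⟨measurable_const, 1, fun x => by simp⟩
lemma nice_chi (η : ℝ) : Nice (chi η) := ⟨chi_meas η, 1, chi_norm η⟩
lemma schwartz_nice (f : SchwartzMap ℝ ℂ) : Nice f :=
  ⟨f.continuous.measurable, _, fun x => SchwartzMap.norm_le_seminorm ℝ f x⟩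
lemma nice_refl {f : ℝ → ℂ} (hf : Nice f) (e : ℝ) : Nice (fun y => f (e - y)) :=
  ⟨hf.1.comp (by fun_prop), hf.2.imp fun _ h x => h _⟩

lemma nice_int {a f : ℝ → ℂ} (ha : Integrable a) (hf : Nice f) : Nice (fun s => ∫ u, a u * f (s + u)) := by
  obtain ⟨mf, C, hC⟩ := hf
  constructor
  · have ha' := ha.aestronglyMeasurable
    have : (fun s => ∫ u, a u * f (s + u)) = fun s => ∫ u, ha'.mk a u * f (s+u) := by
      ext s
      refine integral_congr_ae ?_
      filter_upwards [ha'.ae_eq_mk] with u hu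
      rw [hu]
    rw [this]
    refine StronglyMeasurable.measurable ?_
    refine StronglyMeasurable.integral_prod_right (f := fun (s u : ℝ) => ha'.mk a u * f (s+u)) ?_
    have h1 : Measurable fun p : ℝ × ℝ => ha'.mk a p.2 := ha'.stronglyMeasurable_mk.measurable.comp measurable_snd
    have h2 : Measurable fun p : ℝ × ℝ => f (p.1 + p.2) := mf.comp (by fun_prop)
    exact (h1.mul h2).stronglyMeasurable
  · refine ⟨∫ u, ‖a u‖ * C, fun s => ?_⟩
    refine norm_integral_le_of_norm_le (ha.norm.mul_const C) (Filter.Eventually.of_forall fun u => ?_)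
    rw [norm_mul]
    gcongr
    exact hC _

def QQ : ℕ → (ℕ → ℝ → ℂ) → (ℕ → ℝ → ℂ) → (ℝ → ℂ) → ℝ → ℂ
  | 0, _, _, φ => φ
  | n+1, a, χ, φ => fun s => ∫ u, a 0 u *
      (χ 0 (s + u) * QQ n (fun p => a (p+1)) (fun p => χ (p+1)) φ (s + u))

lemma QQ_add (m n : ℕ) (a χ : ℕ → ℝ → ℂ) (φ : ℝ → ℂ) :
    QQ (m+n) a χ φ = QQ m a χ (QQ n (fun p => a (p+m)) (fun p => χ (p+m)) φ) := by
  induction m generalizing a χ with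
  | zero => simp [QQ]
  | succ m ih =>
    rw [show m + 1 + n = (m+n)+1 by ring]
    simp only [QQ]
    rw [ih]
    simp only [add_assoc]

lemma QQ_nice (n : ℕ) (a χ : ℕ → ℝ → ℂ) (φ : ℝ → ℂ) (ha : ∀ p, Integrable (a p))
    (hχ : ∀ p, Nice (χ p)) (hφ : Nice φ) : Nice (QQ n a χ φ) := by
  induction n generalizing a χ with
  | zero => exact hφ
  | succ n ih =>
    simp only [QQ]
    exact nice_int (f := fun y => χ 0 y * QQ n (fun p => a (p+1)) (fun p => χ (p+1)) φ y) (ha 0)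
      ((hχ 0).mul (ih _ _ (fun p => ha _) (fun p => hχ _)))

lemma conv_int (h : SchwartzMap ℝ ℝ) (k : ℕ) (g : ℝ → ℂ) (hg : Nice g) (s : ℝ) :
    ∫ u, Fh h 1 u * ∫ w, Fh h (k+1) w * g (s + u + w) = ∫ v, Fh h (k+2) v * g (s + v) := by
  have e1 : ∀ u, ∫ w, Fh h (k+1) w * g (s + u + w) = ∫ v, Fh h (k+1) (v - u) * g (s + v) := by
    intro u
    rw [← integral_sub_right_eq_self _ u]
    congr 1; ext v; congr 2; ring
  simp_rw [e1, ← integral_const_mul]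
  rw [integral_integral_swap]
  · congr 1; ext v
    simp_rw [← mul_assoc]
    rw [integral_mul_const, Fh_conv]
  · have := ((Fh h 1).integrable (μ := volume)).convolution_integrand (ContinuousLinearMap.mul ℂ ℂ)
      ((Fh h (k+1)).integrable (μ := volume))
    obtain ⟨mg, C, hC⟩ := hg
    have m2 : Measurable fun p : ℝ × ℝ => g (s + p.1) := mg.comp (by fun_prop)
    have := (this.mul_bdd (c := C) m2.aestronglyMeasurable (Filter.Eventually.of_forall fun p => hC _)).swap
    refine this.congr (Filter.Eventually.of_forall fun p => ?_)
    simp [Function.uncurry, mul_assoc]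

lemma QQ_block (h : SchwartzMap ℝ ℝ) (k : ℕ) (χ : ℕ → ℝ → ℂ) (φ : ℝ → ℂ) (hφ : Nice φ)
    (hχ : ∀ p < k, χ p = fun _ => 1) (hk : Nice (χ k)) (s : ℝ) :
    QQ (k+1) (fun _ => Fh h 1) χ φ s = ∫ u, Fh h (k+1) u * (χ k (s+u) * φ (s+u)) := by
  induction k generalizing χ s with
  | zero => rfl
  | succ k ih =>
    rw [QQ]
    rw [hχ 0 (by omega)]
    simp only [one_mul]
    have := fun s => ih (fun p => χ (p+1)) (fun p hp => hχ (p+1) (by omega)) hk s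
    simp_rw [this]
    exact conv_int h k (fun y => χ (k+1) y * φ y) (hk.mul hφ) s

lemma QQ_last (h : SchwartzMap ℝ ℝ) (k : ℕ) (χ : ℕ → ℝ → ℂ) (e : ℝ)
    (hχ : ∀ p < k, χ p = fun _ => 1) (s : ℝ) :
    QQ k (fun _ => Fh h 1) χ (fun y => Fh h 1 (e - y)) s = Fh h (k+1) (e - s) := by
  induction k generalizing χ s with
  | zero => rfl
  | succ k ih =>
    rw [QQ]
    rw [hχ 0 (by omega)]
    simp only [one_mul]
    have := fun s => ih (fun p => χ (p+1)) (fun p hp => hχ (p+1) (by omega)) s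
    simp_rw [this]
    rw [← Fh_conv]
    congr 1; ext u; congr 2; ring

def bdry (ks : List ℕ) (p : ℕ) : Prop := ∃ j, 1 ≤ j ∧ j < ks.length ∧ (ks.take j).sum = p

open Classical in
def chiB (η : ℝ) (ks : List ℕ) (p : ℕ) : ℝ → ℂ := if bdry ks (p+1) then chi η else fun _ => 1

lemma chiB_nice (η : ℝ) (ks : List ℕ) (p : ℕ) : Nice (chiB η ks p) := by
  unfold chiB; split_ifs
  · exact nice_chi η
  · exact nice_one

lemma bdry_cons_shift (k : ℕ) (ks : List ℕ) (p : ℕ) : bdry (k :: ks) (p + k + 1) ↔ bdry ks (p+1) := by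
  constructor
  · rintro ⟨j, h1, h2, h3⟩
    obtain ⟨j, rfl⟩ := Nat.exists_eq_add_of_le' h1
    simp only [List.take_succ_cons, List.sum_cons, List.length_cons] at h2 h3
    refine ⟨j, ?_, by omega, by omega⟩
    rcases j with _ | j
    · simp at h3; omega
    · omega
  · rintro ⟨j, h1, h2, h3⟩
    refine ⟨j+1, by omega, by simpa using h2, ?_⟩
    simp only [List.take_succ_cons, List.sum_cons]; omega

lemma bdry_cons_ge (k : ℕ) (ks : List ℕ) (p : ℕ) (h : bdry (k :: ks) p) : k ≤ p := by
  obtain ⟨j, h1, h2, h3⟩ := h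
  obtain ⟨j, rfl⟩ := Nat.exists_eq_add_of_le' h1
  simp only [List.take_succ_cons, List.sum_cons] at h3
  omega

lemma QQ_list (h : SchwartzMap ℝ ℝ) (η : ℝ) (ks : List ℕ) (hne : ks ≠ []) (hpos : ∀ k ∈ ks, 0 < k) (e s : ℝ) :
    QQ (ks.sum - 1) (fun _ => Fh h 1) (chiB η ks) (fun y => Fh h 1 (e - y)) s
      = QQ (ks.length - 1) (fun p => Fh h (ks.getD p 0)) (fun _ => chi η)
          (fun y => Fh h (ks.getD (ks.length - 1) 0) (e - y)) s := by
  induction ks generalizing s with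
  | nil => exact absurd rfl hne
  | cons k ks ih =>
    obtain ⟨k, rfl⟩ : ∃ k', k = k' + 1 := ⟨k - 1, by have := hpos k (by simp); omega⟩
    have hlt : ∀ p < k, chiB η ((k+1) :: ks) p = fun _ => 1 := by
      intro p hp
      unfold chiB
      rw [if_neg]
      intro hb
      have := bdry_cons_ge _ _ _ hb
      omega
    rcases eq_or_ne ks [] with rfl | hks
    · simp only [List.sum_cons, List.sum_nil, add_zero, add_tsub_cancel_right, List.length_cons, List.length_nil,
        zero_add, Nat.sub_self, List.getD_cons_zero]
      rw [QQ_last h k _ e hlt s]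
      rfl
    · have hpos' : ∀ k ∈ ks, 0 < k := fun x hx => hpos x (by simp [hx])
      have hsum : 0 < ks.sum := by
        obtain ⟨x, hx⟩ := List.exists_mem_of_ne_nil _ hks
        exact (hpos' x hx).trans_le (List.single_le_sum (by simp) _ hx)
      have hlen : 0 < ks.length := List.length_pos_of_ne_nil hks
      have ih' := fun s => ih hks hpos' s
      rw [show ((k+1) :: ks).sum - 1 = (k+1) + (ks.sum - 1) by simp; omega, QQ_add]
      rw [QQ_block h k]
      · have hk : chiB η ((k+1) :: ks) k = chi η := by
          unfold chiB; rw [if_pos]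
          exact ⟨1, le_rfl, by simp; omega, by simp⟩
        have hsh : (fun p => chiB η ((k+1)::ks) (p + (k+1))) = chiB η ks := by
          ext1 p; unfold chiB; classical exact if_congr (bdry_cons_shift (k+1) ks p) rfl rfl
        rw [hk, hsh]
        simp_rw [ih']
        obtain ⟨m, hm⟩ : ∃ m, ks.length = m + 1 := ⟨ks.length - 1, by omega⟩
        simp only [List.length_cons, hm, add_tsub_cancel_right, QQ, List.getD_cons_zero, List.getD_cons_succ]
      · exact QQ_nice _ _ _ _ (fun p => (Fh h 1).integrable) (fun p => chiB_nice _ _ _)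
          (nice_refl (schwartz_nice _) e)
      · exact hlt
      · exact chiB_nice _ _ _

lemma mp_cons (n : ℕ) : MeasurePreserving (fun p : ℝ × (Fin n → ℝ) => (Fin.cons p.1 p.2 : Fin (n+1) → ℝ))
    (volume.prod volume) volume := by
  have := (volume_preserving_piFinSuccAbove (fun _ : Fin (n+1) => ℝ) 0).symm
  convert! this using 1
  ext p i
  simp [MeasurableEquiv.piFinSuccAbove]

lemma mp_snoc (n : ℕ) : MeasurePreserving (fun p : ℝ × (Fin n → ℝ) => (Fin.snoc p.2 p.1 : Fin (n+1) → ℝ))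
    (volume.prod volume) volume := by
  have := (volume_preserving_piFinSuccAbove (fun _ : Fin (n+1) => ℝ) (Fin.last n)).symm
  convert! this using 1
  ext p i
  simp [MeasurableEquiv.piFinSuccAbove]

lemma int_cons (n : ℕ) (f : (Fin (n+1) → ℝ) → ℂ) :
    ∫ x, f x = ∫ p : ℝ × (Fin n → ℝ), f (Fin.cons p.1 p.2) ∂(volume.prod volume) := by
  have := (volume_preserving_piFinSuccAbove (fun _ : Fin (n+1) => ℝ) 0).symm.integral_comp' f
  rw [← this]
  simp [MeasurableEquiv.piFinSuccAbove]
  rfl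

lemma int_snoc (n : ℕ) (f : (Fin (n+1) → ℝ) → ℂ) :
    ∫ x, f x = ∫ p : ℝ × (Fin n → ℝ), f (Fin.snoc p.2 p.1) ∂(volume.prod volume) := by
  have := (volume_preserving_piFinSuccAbove (fun _ : Fin (n+1) => ℝ) (Fin.last n)).symm.integral_comp' f
  rw [← this]
  simp [MeasurableEquiv.piFinSuccAbove]
  rfl

lemma int_cons_iter (n : ℕ) (f : (Fin (n+1) → ℝ) → ℂ) (hf : Integrable f) :
    ∫ x, f x = ∫ x : ℝ, ∫ u : Fin n → ℝ, f (Fin.cons x u) := by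
  have hi' := ((mp_cons n).integrable_comp hf.aestronglyMeasurable).2 hf
  rw [int_cons]
  exact integral_prod _ hi'

lemma int_snoc_iter (n : ℕ) (f : (Fin (n+1) → ℝ) → ℂ) (hf : Integrable f) :
    ∫ x, f x = ∫ u : Fin n → ℝ, ∫ x : ℝ, f (Fin.snoc u x) := by
  have hi' := ((mp_snoc n).integrable_comp hf.aestronglyMeasurable).2 hf
  rw [int_snoc]
  exact integral_prod_symm _ hi'

lemma psum_cons {n : ℕ} (x : ℝ) (u : Fin n → ℝ) (m : ℕ) :
    psum (Fin.cons x u : Fin (n+1) → ℝ) (m+1) = x + psum u m := by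
  unfold psum
  rw [Fin.sum_univ_succ]
  simp

lemma psum_self {n : ℕ} (u : Fin n → ℝ) : psum u n = ∑ i, u i := by
  unfold psum; simp

lemma psum_cont {n : ℕ} (m : ℕ) : Continuous (fun u : Fin n → ℝ => psum u m) := by
  unfold psum
  refine continuous_finsetSum _ fun i _ => ?_
  split_ifs <;> fun_prop

lemma pi_bdd {n : ℕ} (a : ℕ → ℝ → ℂ) (ha : ∀ p, Integrable (a p)) (B : (Fin n → ℝ) → ℂ)
    (mB : Measurable B) (C : ℝ) (hB : ∀ u, ‖B u‖ ≤ C) :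
    Integrable (fun u : Fin n → ℝ => (∏ p : Fin n, a p (u p)) * B u) := by
  have := Integrable.fintype_prod (f := fun p : Fin n => a p) (μ := fun _ => volume) (fun p => ha p)
  exact this.mul_bdd (c := C) mB.aestronglyMeasurable (Filter.Eventually.of_forall hB)

lemma prod_bdd {ι : Type*} [Fintype ι] {X : Type*} (f : ι → X → ℂ) (hf : ∀ i, ∃ C, ∀ x, ‖f i x‖ ≤ C) :
    ∃ C, ∀ x, ‖∏ i, f i x‖ ≤ C := by
  choose C hC using hf
  refine ⟨∏ i, C i, fun x => ?_⟩
  rw [norm_prod]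
  exact Finset.prod_le_prod (fun i _ => norm_nonneg _) (fun i _ => hC i x)

lemma Bfun_nice {n : ℕ} (χ : ℕ → ℝ → ℂ) (φ : ℝ → ℂ) (hχ : ∀ p, Nice (χ p)) (hφ : Nice φ) :
    Measurable (fun p : ℝ × (Fin n → ℝ) => (∏ i : Fin n, χ i (p.1 + psum p.2 (i+1))) * φ (p.1 + psum p.2 n)) ∧
    ∃ C, ∀ p : ℝ × (Fin n → ℝ), ‖(∏ i : Fin n, χ i (p.1 + psum p.2 (i+1))) * φ (p.1 + psum p.2 n)‖ ≤ C := by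
  constructor
  · refine Measurable.mul (Finset.measurable_prod _ fun i _ => (hχ i).1.comp ?_) (hφ.1.comp ?_)
    · exact measurable_fst.add ((psum_cont _).measurable.comp measurable_snd)
    · exact measurable_fst.add ((psum_cont _).measurable.comp measurable_snd)
  · obtain ⟨C, hC⟩ := prod_bdd (fun (i : Fin n) (p : ℝ × (Fin n → ℝ)) => χ i (p.1 + psum p.2 (i+1)))
      (fun i => (hχ i).2.imp fun C h p => h _)
    obtain ⟨D, hD⟩ := hφ.2
    refine ⟨C * D, fun p => ?_⟩
    rw [norm_mul]
    exact mul_le_mul (hC p) (hD _) (norm_nonneg _) ((norm_nonneg _).trans (hC p))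

lemma QQ_inc (n : ℕ) (a χ : ℕ → ℝ → ℂ) (φ : ℝ → ℂ) (ha : ∀ p, Integrable (a p))
    (hχ : ∀ p, Nice (χ p)) (hφ : Nice φ) (s : ℝ) :
    QQ n a χ φ s = ∫ u : Fin n → ℝ, (∏ p : Fin n, a p (u p)) *
      ((∏ p : Fin n, χ p (s + psum u (p+1))) * φ (s + psum u n)) := by
  induction n generalizing a χ s with
  | zero => simp [QQ, psum, volume_pi, Measure.pi_of_empty, measureReal_def]
  | succ n ih =>
    have hB := Bfun_nice (n := n+1) χ φ hχ hφ
    obtain ⟨C, hC⟩ := hB.2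
    have hi := pi_bdd (n := n+1) a ha (fun u => (∏ p : Fin (n+1), χ p (s + psum u (p+1))) * φ (s + psum u (n+1)))
      (hB.1.comp (measurable_const.prodMk measurable_id)) C (fun u => hC (s, u))
    rw [int_cons_iter _ _ hi, QQ]
    refine integral_congr_ae (Filter.Eventually.of_forall fun x => ?_)
    beta_reduce
    rw [ih _ _ (fun p => ha _) (fun p => hχ _), ← integral_const_mul, ← integral_const_mul]
    congr 1; ext u
    rw [Fin.prod_univ_succ, Fin.prod_univ_succ]
    simp only [psum_cons, Fin.cons_zero, Fin.cons_succ, Fin.val_zero, Fin.val_succ]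
    rw [show psum u 0 = 0 by simp [psum]]
    simp only [add_zero, add_assoc]
    ring

lemma psum_Ufull (N : ℕ) (u : Fin N → ℝ) (m : ℕ) (hm : m ≤ N) : psum (Ufull (N+1) u) m = psum u m := by
  unfold psum
  rw [Fin.sum_univ_castSucc]
  have : ¬ ((Fin.last N : Fin (N+1)) : ℕ) < m := by simp; omega
  rw [if_neg this, add_zero]
  refine Finset.sum_congr rfl fun i _ => ?_
  simp [Ufull]

lemma psum_neg {n : ℕ} (v : Fin n → ℝ) (m : ℕ) : psum (-v) m = - psum v m := by
  unfold psum
  rw [← Finset.sum_neg_distrib]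
  refine Finset.sum_congr rfl fun i _ => ?_
  split_ifs <;> simp

lemma vol_eq (N : ℕ) (η : ℝ) (c : Composition (N+1)) (u : Fin N → ℝ) :
    ∫ t : ℝ, chi η t * ∏ p : Fin N, chiB η c.blocks p (t + psum u (p+1)) =
    ((max 0 (η - Psi (Ufull (N+1) u) c / 2 - Psi (-(Ufull (N+1) u)) c / 2) : ℝ) : ℂ) := by
  set Mp := Finset.fold max 0 (fun j => psum (Ufull (N+1) u) (c.sizeUpTo j)) (Finset.Ico 1 c.length) with hMp
  set Mm := Finset.fold max 0 (fun j => psum (-(Ufull (N+1) u)) (c.sizeUpTo j)) (Finset.Ico 1 c.length) with hMm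
  have hP : Psi (Ufull (N+1) u) c = 2 * Mp := rfl
  have hM : Psi (-(Ufull (N+1) u)) c = 2 * Mm := rfl
  have hp0 : 0 ≤ Mp := (Finset.le_fold_max 0).2 (Or.inl le_rfl)
  have hm0 : 0 ≤ Mm := (Finset.le_fold_max 0).2 (Or.inl le_rfl)
  have hsz : ∀ j ∈ Finset.Ico 1 c.length, 1 ≤ c.sizeUpTo j ∧ c.sizeUpTo j ≤ N := by
    intro j hj
    rw [Finset.mem_Ico] at hj
    have h1 : c.sizeUpTo 0 < c.sizeUpTo 1 := c.sizeUpTo_strict_mono (by omega)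
    have h2 : c.sizeUpTo 1 ≤ c.sizeUpTo j := c.monotone_sizeUpTo hj.1
    have h3 : c.sizeUpTo j < c.sizeUpTo (j+1) := c.sizeUpTo_strict_mono hj.2
    have h4 := c.sizeUpTo_le (j+1)
    omega
  have hin : ∀ t, chi η t * ∏ p : Fin N, chiB η c.blocks p (t + psum u (p+1)) =
      Set.indicator (Set.Icc (-(η/2) + Mm) (η/2 - Mp)) (fun _ => (1:ℂ)) t := by
    intro t
    by_cases ht : t ∈ Set.Icc (-(η/2) + Mm) (η/2 - Mp)
    · rw [Set.indicator_of_mem ht]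
      obtain ⟨t1, t2⟩ := ht
      have : chi η t = 1 := Set.indicator_of_mem (by constructor <;> linarith) _
      rw [this, one_mul]
      refine Finset.prod_eq_one fun p _ => ?_
      unfold chiB
      split_ifs with hb
      · obtain ⟨j, j1, j2, j3⟩ := hb
        have hj : j ∈ Finset.Ico 1 c.length := Finset.mem_Ico.2 ⟨j1, j2⟩
        have j3' : c.sizeUpTo j = p + 1 := j3
        have e1 : psum (Ufull (N+1) u) (c.sizeUpTo j) ≤ Mp := (Finset.le_fold_max _).2 (Or.inr ⟨j, hj, le_rfl⟩)
        have e2 : psum (-(Ufull (N+1) u)) (c.sizeUpTo j) ≤ Mm := (Finset.le_fold_max _).2 (Or.inr ⟨j, hj, le_rfl⟩)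
        rw [psum_neg] at e2
        rw [psum_Ufull _ _ _ (hsz j hj).2, j3'] at e1 e2
        exact Set.indicator_of_mem (by constructor <;> linarith) _
      · rfl
    · rw [Set.indicator_of_notMem ht]
      have fac : ∀ j ∈ Finset.Ico 1 c.length, t + psum (Ufull (N+1) u) (c.sizeUpTo j) ∉ Set.Icc (-(η/2)) (η/2) →
          ∏ p : Fin N, chiB η c.blocks p (t + psum u (p+1)) = 0 := by
        intro j hj hn
        have hs := hsz j hj
        refine Finset.prod_eq_zero (Finset.mem_univ (⟨c.sizeUpTo j - 1, by omega⟩ : Fin N)) ?_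
        have e : c.sizeUpTo j - 1 + 1 = c.sizeUpTo j := by omega
        rw [psum_Ufull _ _ _ hs.2] at hn
        unfold chiB
        simp only [e]
        rw [if_pos ⟨j, (Finset.mem_Ico.1 hj).1, (Finset.mem_Ico.1 hj).2, e.symm⟩]
        exact Set.indicator_of_notMem hn _
      rw [Set.mem_Icc, not_and_or, not_le, not_le] at ht
      rcases ht with ht | ht
      · have : t + η/2 < Mm := by linarith
        rcases (Finset.lt_fold_max _).1 this with h | ⟨j, hj, h⟩
        · have : chi η t = 0 := Set.indicator_of_notMem (by rintro ⟨h1, h2⟩; linarith) _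
          rw [this, zero_mul]
        · rw [fac j hj, mul_zero]
          rw [psum_neg] at h
          rintro ⟨h1, h2⟩; linarith
      · have : η/2 - t < Mp := by linarith
        rcases (Finset.lt_fold_max _).1 this with h | ⟨j, hj, h⟩
        · have : chi η t = 0 := Set.indicator_of_notMem (by rintro ⟨h1, h2⟩; linarith) _
          rw [this, zero_mul]
        · rw [fac j hj, mul_zero]
          rintro ⟨h1, h2⟩; linarith
  simp_rw [hin]
  rw [integral_indicator measurableSet_Icc, hP, hM]
  simp only [integral_const, MeasurableSet.univ, measureReal_restrict_apply, Set.univ_inter, Real.volume_real_Icc]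
  rw [max_comm]
  simp
  congr 1; ring

lemma rhs_term (N : ℕ) (η : ℝ) (c : Composition (N+1)) (h : SchwartzMap ℝ ℝ) :
    Integrable (fun u : Fin N → ℝ => (∏ j : Fin (N+1), hat (fun t => h t) (Ufull (N+1) u j)) *
      ((max 0 (η - Psi (Ufull (N+1) u) c / 2 - Psi (-(Ufull (N+1) u)) c / 2) : ℝ) : ℂ)) ∧
    ∫ u : Fin N → ℝ, (∏ j : Fin (N+1), hat (fun t => h t) (Ufull (N+1) u j)) *
      ((max 0 (η - Psi (Ufull (N+1) u) c / 2 - Psi (-(Ufull (N+1) u)) c / 2) : ℝ) : ℂ) =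
    ∫ t, chi η t * QQ N (fun _ => Fh h 1) (chiB η c.blocks) (fun y => Fh h 1 (t - y)) t := by
  have hprod : ∀ u : Fin N → ℝ, (∏ j : Fin (N+1), hat (fun t => h t) (Ufull (N+1) u j))
      = (∏ p : Fin N, Fh h 1 (u p)) * Fh h 1 (- psum u N) := by
    intro u
    rw [Fin.prod_univ_castSucc]
    simp_rw [hat_eq]
    rw [psum_self]
    simp [Ufull]
  have hint : Integrable (fun p : (Fin N → ℝ) × ℝ => ((∏ i : Fin N, Fh h 1 (p.1 i)) * Fh h 1 (- psum p.1 N)) *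
      (chi η p.2 * ∏ i : Fin N, chiB η c.blocks i (p.2 + psum p.1 (i+1)))) (volume.prod volume) := by
    have i1 := Integrable.fintype_prod (f := fun p : Fin N => Fh h 1) (μ := fun _ => volume)
      (fun p => (Fh h 1).integrable)
    have i2 := i1.mul_prod (chi_int η)
    have hB := Bfun_nice (n := N) (chiB η c.blocks) (fun _ => 1) (chiB_nice _ _) nice_one
    obtain ⟨C, hC⟩ := hB.2
    obtain ⟨D, hD⟩ := (schwartz_nice (Fh h 1)).2
    have m1 : Measurable (fun p : (Fin N → ℝ) × ℝ => Fh h 1 (- psum p.1 N)) :=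
      (Fh h 1).continuous.measurable.comp ((psum_cont N).measurable.comp measurable_fst).neg
    have i3 := (i2.mul_bdd (c := C) ((hB.1.comp measurable_swap).aestronglyMeasurable)
      (Filter.Eventually.of_forall fun p => hC p.swap)).mul_bdd (c := D) m1.aestronglyMeasurable
      (Filter.Eventually.of_forall fun p => hD _)
    refine i3.congr (Filter.Eventually.of_forall fun p => ?_)
    simp only [Function.comp, Prod.fst_swap, Prod.snd_swap, mul_one]
    ring
  have e1 : ∀ u : Fin N → ℝ, (∏ j : Fin (N+1), hat (fun t => h t) (Ufull (N+1) u j)) *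
      ((max 0 (η - Psi (Ufull (N+1) u) c / 2 - Psi (-(Ufull (N+1) u)) c / 2) : ℝ) : ℂ) =
      ∫ t, ((∏ i : Fin N, Fh h 1 (u i)) * Fh h 1 (- psum u N)) *
      (chi η t * ∏ i : Fin N, chiB η c.blocks i (t + psum u (i+1))) := by
    intro u
    rw [hprod, ← vol_eq, integral_const_mul]
  constructor
  · simp_rw [e1]
    exact hint.integral_prod_left
  · simp_rw [e1]
    rw [integral_integral_swap hint]
    congr 1; ext t
    rw [QQ_inc _ _ _ _ (fun _ => (Fh h 1).integrable) (chiB_nice _ _) (nice_refl (schwartz_nice _) t), ← integral_const_mul]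
    congr 1; ext u
    rw [show t - (t + psum u N) = - psum u N by ring]
    ring

lemma cpred_zero (M : ℕ) : cpred (0 : Fin (M+1)) = Fin.last M := by
  ext; simp [cpred]

lemma cpred_succ (M : ℕ) (i : Fin M) : cpred i.succ = i.castSucc := by
  ext
  simp only [cpred, Fin.val_succ, Fin.val_castSucc]
  rw [show (i:ℕ) + 1 + (M+1-1) = i + (M+1) by omega, Nat.add_mod_right, Nat.mod_eq_of_lt (by omega)]

lemma prod_le_sum_aux {M : ℕ} (b : Fin (M+2) → ℝ) (hb : ∀ i, 0 < b i) :
    ∏ i, b i ≤ ∑ j, ∏ i ∈ Finset.univ.erase j, (b i) ^ (1 + 1/((M:ℝ)+1)) := by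
  obtain ⟨j, -, hj⟩ := Finset.exists_min_image Finset.univ b ⟨0, Finset.mem_univ _⟩
  have hM : (0:ℝ) < (M:ℝ)+1 := by positivity
  have h1 : b j ≤ ∏ i ∈ Finset.univ.erase j, (b i) ^ (1/((M:ℝ)+1)) := by
    have : ∏ i ∈ Finset.univ.erase j, (b j) ^ (1/((M:ℝ)+1)) ≤ ∏ i ∈ Finset.univ.erase j, (b i) ^ (1/((M:ℝ)+1)) := by
      refine Finset.prod_le_prod (fun i _ => (Real.rpow_pos_of_pos (hb j) _).le) fun i _ => ?_
      exact Real.rpow_le_rpow (hb j).le (hj i (Finset.mem_univ _)) (by positivity)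
    refine le_trans (le_of_eq ?_) this
    rw [Finset.prod_const, Finset.card_erase_of_mem (Finset.mem_univ _)]
    simp only [Finset.card_univ, Fintype.card_fin]
    rw [show M + 2 - 1 = M + 1 by omega, ← Real.rpow_natCast, ← Real.rpow_mul (hb j).le]
    push_cast
    rw [one_div, inv_mul_cancel₀ hM.ne', Real.rpow_one]
  have h2 : ∏ i, b i ≤ ∏ i ∈ Finset.univ.erase j, (b i) ^ (1 + 1/((M:ℝ)+1)) := by
    rw [← Finset.mul_prod_erase _ _ (Finset.mem_univ j)]
    calc _ ≤ (∏ i ∈ Finset.univ.erase j, (b i) ^ (1/((M:ℝ)+1))) * ∏ i ∈ Finset.univ.erase j, b i := by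
            gcongr
            exact Finset.prod_nonneg fun i _ => (hb i).le
      _ = _ := by
            rw [← Finset.prod_mul_distrib]
            refine Finset.prod_congr rfl fun i _ => ?_
            rw [Real.rpow_add (hb i), Real.rpow_one, mul_comm]
  refine h2.trans ?_
  exact Finset.single_le_sum (f := fun j => ∏ i ∈ Finset.univ.erase j, (b i) ^ (1 + 1/((M:ℝ)+1)))
    (fun j _ => Finset.prod_nonneg fun i _ => (Real.rpow_pos_of_pos (hb i) _).le) (Finset.mem_univ j)

def Tmap (M : ℕ) (j : Fin (M+2)) : (Fin (M+2) → ℝ) →ₗ[ℝ] (Fin (M+2) → ℝ) where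
  toFun x := fun i => if i = j then x 0 else x i - x (cpred i)
  map_add' x y := by
    ext i; by_cases h : i = j
    · simp [h]
    · simp [h]; ring
  map_smul' c x := by
    ext i; by_cases h : i = j
    · simp [h]
    · simp [h]; ring

lemma Tmap_inj (M : ℕ) (j : Fin (M+2)) (x : Fin (M+2) → ℝ) (hx : Tmap M j x = 0) : x = 0 := by
  have h0 : x 0 = 0 := by
    have := congrFun hx j
    simpa [Tmap] using this
  have hs : ∀ i, i ≠ j → x i = x (cpred i) := by
    intro i hi
    have := congrFun hx i
    simp [Tmap, hi] at this
    linarith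
  have hs' : ∀ a : ℕ, (ha : a + 1 < M+2) → a + 1 ≠ j → x ⟨a+1, ha⟩ = x ⟨a, by omega⟩ := by
    intro a ha hj
    have := hs (Fin.succ ⟨a, by omega⟩) (by intro h; apply hj; rw [← h]; rfl)
    rw [cpred_succ] at this
    exact this
  have A : ∀ a : ℕ, (ha : a < M+2) → (a < j ∨ (j:ℕ) = 0) → x ⟨a, ha⟩ = 0 := by
    intro a
    induction a with
    | zero => intro ha _; exact h0
    | succ a ih =>
      intro ha hj
      rw [hs' a ha (by omega)]
      exact ih (by omega) (by omega)
  by_cases hj0 : (j:ℕ) = 0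
  · ext i; exact A i i.2 (Or.inr hj0)
  · have hl : x (Fin.last (M+1)) = 0 := by
      have := hs 0 (by intro h; apply hj0; rw [← h]; rfl)
      rw [cpred_zero] at this
      rw [← this, h0]
    have B : ∀ d : ℕ, (hd : d ≤ M+1) → (j:ℕ) ≤ M+1-d → x ⟨M+1-d, by omega⟩ = 0 := by
      intro d
      induction d with
      | zero => intro _ _; exact hl
      | succ d ih =>
        intro hd hj
        have h1 := ih (by omega) (by omega)
        have h2 := hs' (M+1-(d+1)) (by omega) (by omega)
        rw [← h2, ← h1]
        congr 2; omega
    ext i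
    rcases lt_or_ge (i:ℕ) j with h | h
    · exact A i i.2 (Or.inl h)
    · have := B (M+1-i) (by omega) (by omega)
      simp only [Pi.zero_apply]
      rw [← this]
      congr 1; ext; simp; omega

lemma integrable_Tmap (M : ℕ) (j : Fin (M+2)) (g : (Fin (M+2) → ℝ) → ℝ) (hg : Integrable g) :
    Integrable (fun x => g (Tmap M j x)) := by
  have hdet : LinearMap.det (Tmap M j) ≠ 0 := by
    intro h
    have := LinearMap.bot_lt_ker_of_det_eq_zero h
    rw [LinearMap.ker_eq_bot'.2 (Tmap_inj M j)] at this
    exact lt_irrefl _ this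
  have hm := Measure.map_linearMap_addHaar_eq_smul_addHaar (volume : Measure (Fin (M+2) → ℝ)) hdet
  have hg' : Integrable g (Measure.map (Tmap M j) volume) := by
    rw [hm]; exact hg.smul_measure (by simp)
  exact hg'.comp_measurable (Tmap M j).continuous_of_finiteDimensional.measurable

def LL (η : ℝ) (m : ℕ) (f : ℕ → ℝ → ℂ) (x : Fin m → ℝ) : ℂ :=
  (∏ j : Fin m, f j (x j)) * ∏ j : Fin m, kC η (x j - x (cpred j))

lemma LL_int (η : ℝ) (hη : 0 < η) (M : ℕ) (f : ℕ → ℝ → ℂ) (hf : ∀ p, Nice (f p)) (hf0 : Integrable (f 0)) :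
    Integrable (LL η (M+2) f) := by
  have meas : Measurable (LL η (M+2) f) := by
    unfold LL
    refine Measurable.mul (Finset.measurable_prod _ fun i _ => (hf i).1.comp (measurable_pi_apply _))
      (Finset.measurable_prod _ fun i _ => (kC_cont η).measurable.comp ?_)
    exact (measurable_pi_apply _).sub (measurable_pi_apply _)
  obtain ⟨C, hC⟩ := prod_bdd (fun (i : Fin (M+1)) (x : Fin (M+2) → ℝ) => f (i+1) (x i.succ))
      (fun i => (hf (i+1)).2.imp fun C h p => h _)
  set r : ℝ := 1 + 1/((M:ℝ)+1) with hr
  have hr1 : 1 < r := by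
    have : (0:ℝ) < 1/((M:ℝ)+1) := by positivity
    linarith
  let G : Fin (M+2) → (Fin (M+2) → ℝ) → ℝ := fun j y =>
    ∏ i, (if i = j then ‖f 0 (y i)‖ else (1 + ‖y i‖) ^ (-r))
  have hG : ∀ j, Integrable (G j) := by
    intro j
    refine Integrable.fintype_prod (f := fun i (y : ℝ) => if i = j then ‖f 0 y‖ else (1 + ‖y‖) ^ (-r))
      (μ := fun _ => volume) fun i => ?_
    by_cases h : i = j
    · simp only [h, if_true]; exact hf0.norm
    · simp only [h, if_false]; exact integrable_one_add_norm (by simpa using hr1)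
  have hsum : Integrable (fun x => (|C| * (η+1)^(M+2)) * ∑ j, G j (Tmap M j x)) :=
    (integrable_finsetSum _ fun j _ => integrable_Tmap M j _ (hG j)).const_mul _
  refine hsum.mono' meas.aestronglyMeasurable (Filter.Eventually.of_forall fun x => ?_)
  have e1 : ‖LL η (M+2) f x‖ ≤ (‖f 0 (x 0)‖ * |C|) * ((η+1)^(M+2) * ∏ j : Fin (M+2), (1 + ‖x j - x (cpred j)‖)⁻¹) := by
    unfold LL
    rw [norm_mul]
    refine mul_le_mul ?_ ?_ (norm_nonneg _) (by positivity)
    · rw [Fin.prod_univ_succ, norm_mul]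
      refine mul_le_mul_of_nonneg_left ?_ (norm_nonneg _)
      exact (hC x).trans (le_abs_self _)
    · rw [norm_prod]
      have : ∏ j : Fin (M+2), ‖kC η (x j - x (cpred j))‖ ≤ ∏ j : Fin (M+2), ((η+1) * (1 + ‖x j - x (cpred j)‖)⁻¹) :=
        Finset.prod_le_prod (fun _ _ => norm_nonneg _) fun j _ => kC_decay η hη _
      refine this.trans (le_of_eq ?_)
      rw [Finset.prod_mul_distrib]; simp
  refine e1.trans ?_
  have e2 := prod_le_sum_aux (fun j : Fin (M+2) => (1 + ‖x j - x (cpred j)‖)⁻¹) (fun j => by positivity)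
  have e3 : ∀ j, G j (Tmap M j x) = ‖f 0 (x 0)‖ * ∏ i ∈ Finset.univ.erase j, ((1 + ‖x i - x (cpred i)‖)⁻¹) ^ r := by
    intro j
    simp only [G]
    rw [← Finset.mul_prod_erase _ _ (Finset.mem_univ j)]
    congr 1
    · simp [Tmap]
    · refine Finset.prod_congr rfl fun i hi => ?_
      rw [if_neg (Finset.ne_of_mem_erase hi), Real.inv_rpow (by positivity), Real.rpow_neg (by positivity)]
      simp [Tmap, Finset.ne_of_mem_erase hi]
  simp_rw [e3]
  rw [← Finset.mul_sum]
  calc _ = (|C| * (η + 1) ^ (M + 2)) * (‖f 0 (x 0)‖ * ∏ j : Fin (M+2), (1 + ‖x j - x (cpred j)‖)⁻¹) := by ring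
    _ ≤ _ := by gcongr

lemma LL_step (η : ℝ) (hη : 0 < η) (M : ℕ) (f : ℕ → ℝ → ℂ) (hf : ∀ p, Nice (f p)) (hf0 : Integrable (f 0))
    (h1 : f (M+1) = fun _ => 1) :
    ∫ x, LL η (M+2) f x = ∫ x, LL η (M+1) f x := by
  rw [int_snoc_iter _ _ (LL_int η hη M f hf hf0)]
  refine integral_congr_ae (Filter.Eventually.of_forall fun u => ?_)
  beta_reduce
  have e : ∀ y, LL η (M+2) f (Fin.snoc u y : Fin (M+2) → ℝ) =
      ((∏ j : Fin (M+1), f j (u j)) * ∏ i : Fin M, kC η (u i.succ - u i.castSucc)) *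
        (kC η (u 0 - y) * kC η (y - u (Fin.last M))) := by
    intro y
    have ef : ∏ j : Fin (M+2), f j ((Fin.snoc u y : Fin (M+2) → ℝ) j) = ∏ j : Fin (M+1), f j (u j) := by
      rw [Fin.prod_univ_castSucc]
      simp only [Fin.snoc_castSucc, Fin.snoc_last, Fin.val_castSucc, Fin.val_last, h1, mul_one]
    have e0 : (Fin.snoc u y : Fin (M+2) → ℝ) 0 = u 0 := by
      rw [show (0 : Fin (M+2)) = Fin.castSucc 0 from rfl, Fin.snoc_castSucc]
    have e1 : (Fin.snoc u y : Fin (M+2) → ℝ) (Fin.last M).succ = y := by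
      rw [Fin.succ_last, Fin.snoc_last]
    have e2 : ∀ i : Fin M, (Fin.snoc u y : Fin (M+2) → ℝ) i.castSucc.succ = u i.succ := by
      intro i
      rw [Fin.succ_castSucc, Fin.snoc_castSucc]
    have ek : ∏ j : Fin (M+2), kC η ((Fin.snoc u y : Fin (M+2) → ℝ) j - (Fin.snoc u y : Fin (M+2) → ℝ) (cpred j)) =
        kC η (u 0 - y) * ((∏ i : Fin M, kC η (u i.succ - u i.castSucc)) * kC η (y - u (Fin.last M))) := by
      rw [Fin.prod_univ_succ, Fin.prod_univ_castSucc]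
      simp only [cpred_zero, cpred_succ, Fin.snoc_last, Fin.snoc_castSucc, e0, e1, e2]
    unfold LL
    rw [ef, ek]
    ring
  simp_rw [e]
  rw [integral_const_mul]
  have : ∫ y, kC η (u 0 - y) * kC η (y - u (Fin.last M)) = kC η (u 0 - u (Fin.last M)) := by
    rw [← kC_repro η hη, ← integral_sub_right_eq_self (fun y => kC η (u 0 - u (Fin.last M) - y) * kC η y) (u (Fin.last M))]
    congr 1; ext y; congr 2; ring
  rw [this]
  unfold LL
  rw [Fin.prod_univ_succ (f := fun j => kC η (u j - u (cpred j)))]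
  simp only [cpred_zero, cpred_succ]
  ring

lemma LL_reduce (η : ℝ) (hη : 0 < η) (l n : ℕ) (hl : 1 ≤ l) (hln : l ≤ n) (f : ℕ → ℝ → ℂ) (hf : ∀ p, Nice (f p))
    (hf0 : Integrable (f 0)) (h1 : ∀ p, l ≤ p → f p = fun _ => 1) :
    ∫ x, LL η n f x = ∫ x, LL η l f x := by
  induction n, hln using Nat.le_induction with
  | base => rfl
  | succ n hn ih =>
    obtain ⟨M, rfl⟩ := Nat.exists_eq_add_of_le' (hl.trans hn)
    rw [LL_step η hη M f hf hf0 (h1 _ hn), ih]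

lemma cpred_rot (m : ℕ) (j : Fin (m+1)) : cpred (finRotate (m+1) j) = j := by
  refine Fin.lastCases ?_ (fun i => ?_) j
  · rw [finRotate_last, cpred_zero]
  · rw [finRotate_apply, Fin.coeSucc_eq_succ, cpred_succ]

lemma LL_fourier (η : ℝ) (m : ℕ) (f : ℕ → ℝ → ℂ) (hf : ∀ p : Fin (m+1), Integrable (f p)) :
    ∫ x, LL η (m+1) f x = ∫ t : Fin (m+1) → ℝ, (∏ j, chi η (t j)) *
      ∏ j : Fin (m+1), ∫ x : ℝ, f j x * cexp (-(2 * Real.pi * Complex.I * x * ((t (finRotate (m+1) j) - t j : ℝ) : ℂ))) := by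
  have e1 : ∀ x : Fin (m+1) → ℝ, LL η (m+1) f x = ∫ t : Fin (m+1) → ℝ, (∏ j : Fin (m+1), f j (x j)) *
      ((∏ j, chi η (t j)) * cexp (∑ j, 2 * Real.pi * Complex.I * t j * ((x j - x (cpred j) : ℝ) : ℂ))) := by
    intro x
    unfold LL
    rw [integral_const_mul]
    congr 1
    unfold kC
    rw [← integral_fintype_prod_volume_eq_prod
      (f := fun (j : Fin (m+1)) (s : ℝ) => chi η s * cexp (2 * Real.pi * Complex.I * s * ((x j - x (cpred j) : ℝ) : ℂ)))]
    congr 1; ext t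
    rw [Finset.prod_mul_distrib, Complex.exp_sum]
  simp_rw [e1]
  rw [integral_integral_swap]
  · congr 1; ext t
    rw [← integral_fintype_prod_volume_eq_prod
      (f := fun (j : Fin (m+1)) (x : ℝ) => f j x * cexp (-(2 * Real.pi * Complex.I * x * ((t (finRotate (m+1) j) - t j : ℝ) : ℂ)))),
      ← integral_const_mul]
    congr 1; ext x
    rw [Finset.prod_mul_distrib, ← Complex.exp_sum]
    rw [mul_left_comm]
    congr 3
    have r : ∑ j, 2 * Real.pi * Complex.I * t j * (x (cpred j) : ℂ)
        = ∑ j, 2 * Real.pi * Complex.I * t (finRotate (m+1) j) * (x j : ℂ) := by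
      rw [← Equiv.sum_comp (finRotate (m+1))]
      simp only [cpred_rot]
    push_cast
    simp only [mul_sub, Finset.sum_sub_distrib, r, neg_sub]
    congr 1 <;> exact Finset.sum_congr rfl fun j _ => by ring
  · have i1 := Integrable.fintype_prod (f := fun p : Fin (m+1) => f p) (μ := fun _ => volume) hf
    have i2 := Integrable.fintype_prod (f := fun p : Fin (m+1) => chi η) (μ := fun _ => volume) (fun _ => chi_int η)
    have i3 := (i1.mul_prod i2).mul_bdd (c := 1)
      (g := fun p : (Fin (m+1) → ℝ) × (Fin (m+1) → ℝ) => 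
        cexp (∑ j, 2 * Real.pi * Complex.I * p.2 j * ((p.1 j - p.1 (cpred j) : ℝ) : ℂ)))
      (Continuous.aestronglyMeasurable (by fun_prop)) (Filter.Eventually.of_forall fun p => ?_)
    · refine i3.congr (Filter.Eventually.of_forall fun p => ?_)
      simp only [Function.uncurry]
      ring
    · rw [show (∑ j, 2 * Real.pi * Complex.I * p.2 j * ((p.1 j - p.1 (cpred j) : ℝ) : ℂ)) = 
        ((∑ j, 2 * Real.pi * p.2 j * (p.1 j - p.1 (cpred j)) : ℝ) : ℂ) * I by
          push_cast
          rw [Finset.sum_mul]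
          exact Finset.sum_congr rfl fun j _ => by ring]
      rw [Complex.norm_exp_ofReal_mul_I]

lemma cons_meas {n : ℕ} (s : ℝ) (i : Fin (n+1)) : Measurable (fun t : Fin n → ℝ => (Fin.cons s t : Fin (n+1) → ℝ) i) := by
  refine Fin.cases ?_ (fun i => ?_) i
  · simp
  · simpa using measurable_pi_apply i

lemma QQ_abs (n : ℕ) (a χ : ℕ → ℝ → ℂ) (φ : ℝ → ℂ) (ha : ∀ p, Nice (a p))
    (hχ : ∀ p, Integrable (χ p)) (hφ : Nice φ) (s : ℝ) :
    QQ n a χ φ s = ∫ t : Fin n → ℝ, (∏ p : Fin n, χ p (t p)) *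
      ((∏ p : Fin n, a p (t p - (Fin.cons s t : Fin (n+1) → ℝ) p.castSucc)) *
        φ ((Fin.cons s t : Fin (n+1) → ℝ) (Fin.last n))) := by
  induction n generalizing a χ s with
  | zero => simp [QQ, volume_pi, measureReal_def]
  | succ n ih =>
    obtain ⟨C, hC⟩ := prod_bdd (fun (p : Fin (n+1)) (t : Fin (n+1) → ℝ) => a p (t p - (Fin.cons s t : Fin (n+2) → ℝ) p.castSucc))
      (fun i => (ha i).2.imp fun C h p => h _)
    obtain ⟨D, hD⟩ := hφ.2
    have hi := pi_bdd (n := n+1) χ hχ (fun t => ((∏ p : Fin (n+1), a p (t p - (Fin.cons s t : Fin (n+2) → ℝ) p.castSucc)) *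
        φ ((Fin.cons s t : Fin (n+2) → ℝ) (Fin.last (n+1)))))
      (Measurable.mul (Finset.measurable_prod _ fun i _ => (ha i).1.comp ((measurable_pi_apply _).sub (cons_meas _ _)))
        (hφ.1.comp (cons_meas _ _))) (C * D) (fun u => by
          rw [norm_mul]
          exact mul_le_mul (hC u) (hD _) (norm_nonneg _) ((norm_nonneg _).trans (hC u)))
    rw [int_cons_iter _ _ hi, QQ]
    beta_reduce
    have sh : ∀ g : ℝ → ℂ, ∫ u, a 0 u * g (s + u) = ∫ x, a 0 (x - s) * g x := by
      intro g
      rw [← integral_sub_right_eq_self _ s]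
      congr 1; ext x; congr 2; ring
    rw [sh (fun y => χ 0 y * QQ n (fun p => a (p+1)) (fun p => χ (p+1)) φ y)]
    refine integral_congr_ae (Filter.Eventually.of_forall fun x => ?_)
    beta_reduce
    rw [ih _ _ (fun p => ha _) (fun p => hχ _), ← integral_const_mul, ← integral_const_mul]
    congr 1; ext u
    rw [Fin.prod_univ_succ, Fin.prod_univ_succ]
    simp only [Fin.cons_zero, Fin.cons_succ, Fin.val_zero, Fin.val_succ, Fin.castSucc_zero, ← Fin.succ_castSucc, ← Fin.succ_last]
    ring

lemma rot_castSucc (m : ℕ) (i : Fin m) : finRotate (m+1) i.castSucc = i.succ := by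
  rw [finRotate_apply, Fin.coeSucc_eq_succ]

lemma lhs_base (h : SchwartzMap ℝ ℝ) (η : ℝ) (m : ℕ) (k : ℕ → ℕ) (hk : ∀ p, p < m+1 → 0 < k p)
    (f : ℕ → ℝ → ℂ) (hf : ∀ p, p < m+1 → f p = fun x => (h x : ℂ) ^ (k p)) :
    ∫ x, LL η (m+1) f x = ∫ t, chi η t * QQ m (fun p => Fh h (k p)) (fun _ => chi η)
      (fun y => Fh h (k m) (t - y)) t := by
  have hint : ∀ p : Fin (m+1), Integrable (f p) := by
    intro p
    rw [hf p p.2]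
    refine ((hPow h (k p - 1)).integrable).congr (Filter.Eventually.of_forall fun x => ?_)
    simp only [hPow_apply]
    rw [Nat.sub_add_cancel (hk p p.2)]
  rw [LL_fourier η m f hint]
  have e : ∀ t : Fin (m+1) → ℝ, ∀ j : Fin (m+1),
      ∫ x : ℝ, f j x * cexp (-(2 * Real.pi * Complex.I * x * ((t (finRotate (m+1) j) - t j : ℝ) : ℂ)))
      = Fh h (k j) (t (finRotate (m+1) j) - t j) := by
    intro t j
    rw [Fh_apply h _ (hk j j.2), hf j j.2]
  simp_rw [e]
  obtain ⟨C, hC⟩ := prod_bdd (fun (j : Fin (m+1)) (t : Fin (m+1) → ℝ) => Fh h (k j) (t (finRotate (m+1) j) - t j))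
      (fun j => (schwartz_nice (Fh h (k j))).2.imp fun C h p => h _)
  have hi := pi_bdd (n := m+1) (fun _ => chi η) (fun _ => chi_int η)
    (fun t => ∏ j : Fin (m+1), Fh h (k j) (t (finRotate (m+1) j) - t j))
    (Finset.measurable_prod _ fun i _ => (schwartz_nice (Fh h (k i))).1.comp
      ((measurable_pi_apply _).sub (measurable_pi_apply _))) C hC
  rw [int_cons_iter _ _ hi]
  congr 1; ext s
  rw [QQ_abs m _ _ _ (fun p => schwartz_nice _) (fun _ => chi_int η) (nice_refl (schwartz_nice _) s),
    ← integral_const_mul]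
  congr 1; ext t
  rw [Fin.prod_univ_succ (f := fun j => chi η ((Fin.cons s t : Fin (m+1) → ℝ) j)), Fin.prod_univ_castSucc]
  simp only [rot_castSucc, finRotate_last, Fin.cons_zero, Fin.cons_succ, Fin.val_castSucc, Fin.val_last]
  ring

lemma prod_trunc (l n : ℕ) (hln : l ≤ n) (f : ℕ → ℝ → ℂ) (h1 : ∀ p, l ≤ p → f p = fun _ => 1) (x : Fin n → ℝ) :
    ∏ j : Fin n, f j (x j) = ∏ j : Fin l, f j (x (Fin.castLE hln j)) := by
  obtain ⟨r, rfl⟩ := Nat.exists_eq_add_of_le hln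
  rw [Fin.prod_univ_add]
  have : ∀ i : Fin r, f (Fin.natAdd l i) (x (Fin.natAdd l i)) = 1 := by
    intro i; rw [h1 _ (by simp)]
  simp only [this, Finset.prod_const_one, mul_one]
  rfl

lemma lhs_term (N : ℕ) (η : ℝ) (hη : 0 < η) (c : Composition (N+2)) (h : SchwartzMap ℝ ℝ) :
    Integrable (fun x : Fin (N+2) → ℝ =>
      (((∏ j : Fin c.length, (h (x (Fin.castLE c.length_le j))) ^ (c.blocksFun j)) *
        ∏ j : Fin (N+2), Ksin η (x j) (x (cpred j)) : ℝ) : ℂ)) ∧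
    ∫ x : Fin (N+2) → ℝ,
      (((∏ j : Fin c.length, (h (x (Fin.castLE c.length_le j))) ^ (c.blocksFun j)) *
        ∏ j : Fin (N+2), Ksin η (x j) (x (cpred j)) : ℝ) : ℂ) =
    ∫ t, chi η t * QQ (N+1) (fun _=>Fh h 1) (chiB η c.blocks) (fun y=>Fh h 1 (t-y)) t := by
  have hlen : 0 < c.length := c.length_pos_of_pos (by omega)
  let k : ℕ → ℕ := fun p => c.blocks.getD p 0
  have hk : ∀ p, p < c.length → 0 < k p := by
    intro p hp
    simp only [k]
    rw [List.getD_eq_getElem _ _ hp]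
    exact c.blocks_pos (List.getElem_mem _)
  let f : ℕ → ℝ → ℂ := fun p => if p < c.length then (fun x => (h x : ℂ) ^ (k p)) else fun _ => 1
  have hf1 : ∀ p, p < c.length → f p = fun x => (h x : ℂ) ^ (k p) := fun p hp => if_pos hp
  have hf2 : ∀ p, c.length ≤ p → f p = fun _ => 1 := fun p hp => if_neg (by omega)
  have hfe : ∀ p, p < c.length → f p = hPow h (k p - 1) := by
    intro p hp
    rw [hf1 p hp]
    ext x
    rw [hPow_apply, Nat.sub_add_cancel (hk p hp)]
  have hnice : ∀ p, Nice (f p) := by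
    intro p
    by_cases hp : p < c.length
    · rw [hfe p hp]; exact schwartz_nice _
    · rw [hf2 p (by omega)]; exact nice_one
  have hf0 : Integrable (f 0) := by
    rw [hfe 0 hlen]; exact (hPow h _).integrable
  have e : (fun x : Fin (N+2) → ℝ =>
      (((∏ j : Fin c.length, (h (x (Fin.castLE c.length_le j))) ^ (c.blocksFun j)) *
        ∏ j : Fin (N+2), Ksin η (x j) (x (cpred j)) : ℝ) : ℂ)) = LL η (N+2) f := by
    ext x
    unfold LL
    rw [prod_trunc _ _ c.length_le f hf2]
    push_cast
    congr 1
    · refine Finset.prod_congr rfl fun j _ => ?_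
      rw [hf1 j j.2]
      simp only [k]
      rw [List.getD_eq_getElem _ _ j.2]
      rfl
    · exact Finset.prod_congr rfl fun j _ => (kC_eq η hη _ _).symm
  rw [e]
  refine ⟨LL_int η hη N f hnice hf0, ?_⟩
  rw [LL_reduce η hη c.length (N+2) hlen c.length_le f hnice hf0 hf2]
  obtain ⟨m, hm⟩ := Nat.exists_eq_add_of_le' hlen
  have hb := lhs_base h η m k (fun p hp => hk p (by omega)) f (fun p hp => hf1 p (by omega))
  rw [hm]
  rw [hb]
  congr 1; ext t
  have hq := QQ_list h η c.blocks (by intro h0; rw [← c.blocks_length, h0] at hlen; simp at hlen)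
    (fun _ hk => c.blocks_pos hk) t t
  rw [c.blocks_sum, c.blocks_length, hm] at hq
  simp only [Nat.add_sub_cancel, show N + 2 - 1 = N + 1 from rfl] at hq
  rw [hq]

/-- for `n ≥ 2`, `η > 0`, `h` Schwartz, and any map `Υ` on compositions of
`n`, with `x₀ = x_n` and `u_n := −(u₁+⋯+u_{n−1})`,
`∫_{ℝⁿ} Υⁿ[h](x) Π_j K^sin_η(x_j, x_{j−1}) dx
  = ∫_{ℝ^{n−1}} Π_j ĥ(u_j) Σ_{k⊢n} Υ(k) max{0, η − Ψ_u(k)/2 − Ψ_{−u}(k)/2} du`. -/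
theorem sine_kernel_cumulant_identity (n : ℕ) (hn : 2 ≤ n) (η : ℝ) (hη : 0 < η)
    (h : SchwartzMap ℝ ℝ) (Υ : Composition n → ℝ) :
    ((∫ x : Fin n → ℝ,
        UpsilonFun Υ (fun t => h t) x * ∏ j : Fin n, Ksin η (x j) (x (cpred j))
        ∂(Measure.pi fun _ : Fin n => volume) : ℝ) : ℂ)
      = ∫ u : Fin (n - 1) → ℝ,
          (∏ j : Fin n, hat (fun t => h t) (Ufull n u j)) *
            ((∑ c : Composition n, Υ c *
                max 0 (η - Psi (Ufull n u) c / 2 - Psi (-(Ufull n u)) c / 2) : ℝ) : ℂ)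
          ∂(Measure.pi fun _ : Fin (n - 1) => volume) := by
  obtain ⟨N, rfl⟩ := Nat.exists_eq_add_of_le' hn
  have l1 : ∀ x : Fin (N+2) → ℝ, ((UpsilonFun Υ (fun t => h t) x * ∏ j : Fin (N+2), Ksin η (x j) (x (cpred j)) : ℝ) : ℂ)
      = ∑ c : Composition (N+2), (Υ c : ℂ) * (((∏ j : Fin c.length, (h (x (Fin.castLE c.length_le j))) ^ (c.blocksFun j)) *
        ∏ j : Fin (N+2), Ksin η (x j) (x (cpred j)) : ℝ) : ℂ) := by
    intro x
    unfold UpsilonFun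
    rw [Finset.sum_mul]
    push_cast
    exact Finset.sum_congr rfl fun c _ => by ring
  have r1 : ∀ u : Fin (N+1) → ℝ, (∏ j : Fin (N+2), hat (fun t => h t) (Ufull (N+2) u j)) *
            ((∑ c : Composition (N+2), Υ c *
                max 0 (η - Psi (Ufull (N+2) u) c / 2 - Psi (-(Ufull (N+2) u)) c / 2) : ℝ) : ℂ)
      = ∑ c : Composition (N+2), (Υ c : ℂ) * ((∏ j : Fin (N+2), hat (fun t => h t) (Ufull (N+2) u j)) *
         ((max 0 (η - Psi (Ufull (N+2) u) c / 2 - Psi (-(Ufull (N+2) u)) c / 2) : ℝ) : ℂ)) := by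
    intro u
    rw [Complex.ofReal_sum, Finset.mul_sum]
    refine Finset.sum_congr rfl fun c _ => ?_
    rw [Complex.ofReal_mul]; ring
  refine Eq.trans integral_complex_ofReal.symm ?_
  refine Eq.trans (integral_congr_ae (Filter.Eventually.of_forall l1)) ?_
  refine Eq.trans ?_ (integral_congr_ae (Filter.Eventually.of_forall fun u => (r1 u).symm))
  have L := fun c => lhs_term N η hη c h
  have R := fun c => rhs_term (N+1) η c h
  refine (integral_finsetSum (μ := volume) _ fun c _ => (L c).1.const_mul _).trans ?_
  refine Eq.trans ?_ (integral_finsetSum (μ := volume) _ fun c _ => (R c).1.const_mul _).symm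
  refine Finset.sum_congr rfl fun c _ => ?_
  rw [integral_const_mul, integral_const_mul, (L c).2, ← (R c).2]
end
end
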